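/- arXiv:1811.00977 — 4 statements merged into one kernel-verified Lean document; each statement's English description precedes it below -/
import Mathlib

section
/- Let p be an odd prime and G a finite powerful p-group. Then for all i, j ≥ 1 the subgroup Ω_i(G^{p^j}) is powerful, i.e., [Ω_i(G^{p^j}), Ω_i(G^{p^j})] ≤ (Ω_i(G^{p^j}))^p. -/
/-!
The proof rests on one commutator estimate in a finite powerful `p`-group `G`, `p` odd. Write
`P k` for the `k`-th iterated power subgroup (equal to `G^{p^k}`) and `E n` for the set of elements
of order dividing `p ^ n`. The estimate (`commutator_estimate`) reads
`[E (n+1) ∩ P (k+1), E (n+k+1)] ⊆ E n`. Taking both entries in `Ω_i(G^{p^j})`, a commutator is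
killed by `p^{i-1}` and lies in `P (j+1)`; it is therefore `z ^ p` with `z ∈ P j` of order dividing
`p ^ i`, that is, `z ∈ Ω_i(G^{p^j})`.

The estimate is proved by downward induction on `n`, then on `k`. Write the first entry as `d ^ p`
with `d ∈ P k`, and let `t` be the second entry. Then `c = [t, d]` lies in `E (n+1) ∩ P (k+1)` (by
the case `(n+1, k-1)`, or directly if `k = 0`), and by the case `(n, k+1)` the commutator `[c, d]`
is central in `⟨c, d⟩` modulo elements of `E n`. So only the class-two formula
`(c d)^p = c^p d^p [d, c]^{p(p-1)/2}` is needed, and each error term is a `p`-th power of an element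
of `E (n+1)`.

The estimate requires the sets `E n` to be closed under multiplication in the powerful subgroups
`⟨t⟩ G^p`. Closure for all powerful groups follows by induction on the order: if all `⟨t⟩ G^p` are
proper, the estimate holds in `G`, and its case `k = 0` makes `x ↦ x ^ p` multiplicative on
`E (n+1)` modulo `E n ∩ G^p`; if some `⟨t⟩ G^p` is `G`, then `G` is cyclic.

The standard facts about the power series (`commutator_mem_P`: `[P k, G] ≤ P (k+1)`;
`exists_root`: elements of `P (k+1)` are `p`-th powers of elements of `P k`) come from the same
class-two formula.
-/

/-- The subgroup generated by the `n`-th powers of the elements of `H`. -/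
def subgroupPow {G : Type*} [Group G] (H : Subgroup G) (n : ℕ) : Subgroup G :=
  Subgroup.closure {x | ∃ h ∈ H, h ^ n = x}

/-- `Ω_i(H)`: the subgroup generated by the elements of `H` whose order divides `p ^ i`. -/
def omegaSubgroup {G : Type*} [Group G] (p i : ℕ) (H : Subgroup G) : Subgroup G :=
  Subgroup.closure {x | x ∈ H ∧ x ^ p ^ i = 1}

/-- A finite `p`-group `G` is powerful if `[G,G] ≤ G^p` when `p` is odd,
and `[G,G] ≤ G^4` when `p = 2`. -/
def IsPowerful (p : ℕ) (G : Type*) [Group G] : Prop :=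
  if p = 2 then commutator G ≤ subgroupPow (⊤ : Subgroup G) 4
  else commutator G ≤ subgroupPow (⊤ : Subgroup G) p

/-- The subgroup of `n`-th powers of the whole group is normal (indeed characteristic). -/
instance subgroupPow_top_normal {G : Type*} [Group G] (n : ℕ) :
    (subgroupPow (⊤ : Subgroup G) n).Normal := by
  constructor
  intro x hx g
  have key : Subgroup.map (MulAut.conj g).toMonoidHom (subgroupPow (⊤ : Subgroup G) n)
      ≤ subgroupPow (⊤ : Subgroup G) n := by
    rw [subgroupPow, MonoidHom.map_closure]
    apply Subgroup.closure_le _ |>.mpr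
    rintro y ⟨z, ⟨h, -, rfl⟩, rfl⟩
    exact Subgroup.subset_closure ⟨(MulAut.conj g) h, trivial, by
      simp [((MulAut.conj g).toMonoidHom.map_pow h n).symm]⟩
  have hmem : (MulAut.conj g) x ∈
      Subgroup.map (MulAut.conj g).toMonoidHom (subgroupPow (⊤ : Subgroup G) n) :=
    Subgroup.mem_map_of_mem _ hx
  simpa [MulAut.conj_apply] using key hmem

/-- A powerfully central chain `{1} = H 0 ≤ H 1 ≤ ⋯ ≤ H n = G` of length `n`:
`[H (k+1), G] ≤ (H k)^p` for all `k < n`. -/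
def IsPowerfullyCentralChain (p : ℕ) {G : Type*} [Group G] (n : ℕ) (H : ℕ → Subgroup G) : Prop :=
  H 0 = ⊥ ∧ H n = ⊤ ∧ (∀ k, k < n → H k ≤ H (k + 1)) ∧
    ∀ k, k < n → ⁅H (k + 1), (⊤ : Subgroup G)⁆ ≤ subgroupPow (H k) p

/-- A group is powerfully nilpotent if it is powerful and admits a powerfully central chain. -/
def IsPowerfullyNilpotent (p : ℕ) (G : Type*) [Group G] : Prop :=
  IsPowerful p G ∧ ∃ (n : ℕ) (H : ℕ → Subgroup G), IsPowerfullyCentralChain p n H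

/-- The powerful nilpotency class: the least possible length of a powerfully central chain. -/
noncomputable def powerfulNilpotencyClass (p : ℕ) (G : Type*) [Group G] : ℕ :=
  sInf {n | ∃ H : ℕ → Subgroup G, IsPowerfullyCentralChain p n H}

namespace PowerfulOmega

open Subgroup
open scoped commutatorElement

variable {G : Type*} [Group G]

/-! ### Commutators and powers modulo a normal subgroup -/

theorem commutator_swap_mem {W : Subgroup G} {x y : G} (h : ⁅x, y⁆ ∈ W) : ⁅y, x⁆ ∈ W := by
  rw [← commutatorElement_inv]
  exact W.inv_mem h

theorem commute_mk_iff {W : Subgroup G} [W.Normal] {x y : G} :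
    Commute (x : G ⧸ W) (y : G ⧸ W) ↔ ⁅x, y⁆ ∈ W := by
  rw [← commutatorElement_eq_one_iff_commute, ← QuotientGroup.eq_one_iff]
  rfl

/-- If `u = ⁅c, a⁆` commutes with `a` and `c`, then collecting in `(a * c) ^ n` produces
`n.choose 2` copies of `u`. -/
theorem mul_pow_of_class_two {a c u : G} (hu : c * a = u * (a * c)) (ha : Commute u a)
    (hc : Commute u c) (n : ℕ) : (a * c) ^ n = a ^ n * c ^ n * u ^ n.choose 2 := by
  have hmove : ∀ m : ℕ, c ^ m * a = u ^ m * (a * c ^ m) := by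
    intro m
    induction m with
    | zero => simp
    | succ m ih =>
      calc c ^ (m + 1) * a = c * (c ^ m * a) := by rw [pow_succ']; group
        _ = (c * u ^ m) * (a * c ^ m) := by rw [ih]; group
        _ = u ^ m * (c * a) * c ^ m := by rw [← (hc.pow_left m).eq]; group
        _ = u ^ (m + 1) * (a * c ^ (m + 1)) := by
          rw [hu, pow_succ, pow_succ' c]; group
  induction n with
  | zero => simp
  | succ n ih =>
    have h1 : Commute (u ^ n.choose 2) (a * c) := ((ha.mul_right hc).pow_left _)
    calc (a * c) ^ (n + 1) = a ^ n * c ^ n * (u ^ n.choose 2 * (a * c)) := by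
          rw [pow_succ, ih]; group
      _ = a ^ n * (c ^ n * a) * c * u ^ n.choose 2 := by rw [h1.eq]; group
      _ = a ^ n * (u ^ n * (a * c ^ (n + 1))) * u ^ n.choose 2 := by
          rw [hmove, pow_succ c]; group
      _ = a ^ n * ((a * c ^ (n + 1)) * u ^ n) * u ^ n.choose 2 := by
          rw [((ha.mul_right (hc.pow_right _)).pow_left n).eq]
      _ = a ^ (n + 1) * c ^ (n + 1) * u ^ (n + 1).choose 2 := by
          rw [Nat.choose_succ_succ' n 1, Nat.choose_one_right, pow_add u, pow_succ a]; group

/-- For odd `p`, the `p`-th power map is multiplicative on `a` and `c` modulo `W` when `⁅a, c⁆`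
is central in `⟨a, c⟩` and has trivial `p`-th power, both modulo `W`. -/
theorem mk_mul_pow {p : ℕ} (hp : p.Prime) (hp2 : p ≠ 2) (W : Subgroup G) [W.Normal] {a c : G}
    (ha : ⁅⁅a, c⁆, a⁆ ∈ W) (hc : ⁅⁅a, c⁆, c⁆ ∈ W) (hu : ⁅a, c⁆ ^ p ∈ W) :
    (((a * c) ^ p : G) : G ⧸ W) = ((a ^ p * c ^ p : G) : G ⧸ W) := by
  have hup : ((⁅c, a⁆ : G) : G ⧸ W) ^ p = 1 := by
    rw [← QuotientGroup.mk_pow, QuotientGroup.eq_one_iff, ← commutatorElement_inv, inv_pow]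
    exact W.inv_mem hu
  have key := mul_pow_of_class_two (a := (a : G ⧸ W)) (c := (c : G ⧸ W))
    (u := ((⁅c, a⁆ : G) : G ⧸ W))
    (by rw [← QuotientGroup.mk_mul, ← QuotientGroup.mk_mul, ← QuotientGroup.mk_mul,
          commutatorElement_def]; congr 1; group)
    (by rw [← commutatorElement_inv, QuotientGroup.mk_inv]
        exact (commute_mk_iff.2 ha).inv_left)
    (by rw [← commutatorElement_inv, QuotientGroup.mk_inv]
        exact (commute_mk_iff.2 hc).inv_left) p
  obtain ⟨m, hm⟩ := hp.dvd_choose_self (k := 2) (by norm_num)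
    (lt_of_le_of_ne hp.two_le (Ne.symm hp2))
  rw [hm, pow_mul, hup, one_pow, mul_one] at key
  simpa using key

/-- Conjugating `d ^ p` by `t` gives `(⁅t, d⁆ * d) ^ p`, so that `⁅t, d ^ p⁆` can be read off
from the class-two power formula. -/
theorem commutator_pow_mem {p : ℕ} (hp : p.Prime) (hp2 : p ≠ 2) (W : Subgroup G) [W.Normal]
    {t d : G} (hc : ⁅⁅⁅t, d⁆, d⁆, ⁅t, d⁆⁆ ∈ W) (hd : ⁅⁅⁅t, d⁆, d⁆, d⁆ ∈ W)
    (hu : ⁅⁅t, d⁆, d⁆ ^ p ∈ W) (hcp : ⁅t, d⁆ ^ p ∈ W) : ⁅t, d ^ p⁆ ∈ W := by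
  have h := mk_mul_pow hp hp2 W hc hd hu
  have h1 : ⁅t, d⁆ * d = t * d * t⁻¹ := by rw [commutatorElement_def]; group
  rw [h1, conj_pow] at h
  have h2 : ((⁅t, d ^ p⁆ : G) : G ⧸ W) = ((⁅t, d⁆ ^ p : G) : G ⧸ W) := by
    rw [commutatorElement_def, QuotientGroup.mk_mul, h, ← QuotientGroup.mk_mul]
    congr 1
    group
  rw [← QuotientGroup.eq_one_iff, h2, QuotientGroup.eq_one_iff]
  exact hcp

theorem commutator_closure_mem {W : Subgroup G} [W.Normal] {S : Set G}
    (h : ∀ s ∈ S, ∀ g : G, ⁅g, s⁆ ∈ W) {y : G} (hy : y ∈ closure S) (g : G) : ⁅g, y⁆ ∈ W := by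
  rw [← commute_mk_iff]
  induction hy using closure_induction with
  | mem x hx => exact commute_mk_iff.2 (h x hx g)
  | one => exact Commute.one_right _
  | mul x y _ _ hx hy => exact hx.mul_right hy
  | inv x _ hx => exact hx.inv_right

/-- In a nilpotent group, a subgroup `M` may be compared with a normal subgroup `K` modulo
`⁅M, G⁆`. -/
theorem le_of_le_sup_commutator [Group.IsNilpotent G] {M K : Subgroup G} [K.Normal]
    (h : M ≤ K ⊔ ⁅M, (⊤ : Subgroup G)⁆) : M ≤ K := by
  have key : ∀ n, M ≤ K ⊔ (⊤ : Subgroup G).lowerCentralSeries n := by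
    intro n
    induction n with
    | zero => simp
    | succ n ih =>
      refine h.trans (sup_le le_sup_left ?_)
      rw [commutator_le]
      intro y hy g _
      have hy' := ih hy
      rw [sup_eq_closure] at hy'
      refine commutator_swap_mem (commutator_closure_mem ?_ hy' g)
      rintro s (hs | hs) g
      · refine mem_sup_left (commutator_le_right (⊤ : Subgroup G) K ?_)
        exact commutator_mem_commutator (mem_top g) hs
      · exact mem_sup_right (commutator_swap_mem (commutator_mem_commutator hs (mem_top g)))
  obtain ⟨n, hn⟩ := Subgroup.nilpotent_iff_lowerCentralSeries.1 (inferInstance : Group.IsNilpotent G)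
  simpa [hn] using key n

/-! ### The Frattini property of `p`-th powers -/

theorem pow_mem_of_isCoatom {p : ℕ} (hp : p.Prime) [Finite G] (hG : IsPGroup p G)
    {M : Subgroup G} (hM : IsCoatom M) (g : G) : g ^ p ∈ M := by
  have : Fact p.Prime := ⟨hp⟩
  have : Group.IsNilpotent G := hG.isNilpotent
  have : M.Normal := NormalizerCondition.normal_of_coatom M Group.normalizerCondition_of_isNilpotent hM
  obtain ⟨n, hn⟩ := IsPGroup.iff_card.1 hG
  obtain ⟨m, hm⟩ := IsPGroup.iff_card.1 (hG.to_subgroup M)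
  have hlt : Nat.card M < Nat.card G := by
    refine lt_of_le_of_ne (Nat.le_of_dvd Nat.card_pos M.card_subgroup_dvd_card) ?_
    intro h
    exact hM.1 (eq_top_of_card_eq M h)
  rw [hn, hm] at hlt
  have hmn : m < n := (Nat.pow_lt_pow_iff_right hp.one_lt).1 hlt
  obtain ⟨K, hK, hMK⟩ := Sylow.exists_subgroup_card_pow_succ (p := p) (n := m) (G := G)
    (by rw [hn]; exact pow_dvd_pow p hmn) hm
  have hKtop : K = ⊤ := by
    refine hM.2 K (lt_of_le_of_ne hMK ?_)
    rintro rfl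
    rw [hm] at hK
    exact absurd (Nat.pow_right_injective hp.two_le hK) (by omega)
  subst hKtop
  have hidx : M.index = p := by
    have h1 := M.card_mul_index
    rw [card_top] at hK
    rw [hm, hK, pow_succ] at h1
    exact Nat.eq_of_mul_eq_mul_left (pow_pos hp.pos m) h1
  have := M.pow_index_mem g
  rwa [hidx] at this

theorem eq_bot_of_le_subgroupPow {p : ℕ} (hp : p.Prime) [Finite G] (hG : IsPGroup p G)
    {N : Subgroup G} (h : N ≤ subgroupPow N p) : N = ⊥ := by
  by_contra hN
  have : Nontrivial N := (nontrivial_iff_ne_bot N).2 hN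
  obtain ⟨M, hM, -⟩ := (eq_top_or_exists_le_coatom (⊥ : Subgroup N)).resolve_left bot_ne_top
  have hle : N ≤ M.map N.subtype := by
    refine h.trans ((closure_le _).2 ?_)
    rintro x ⟨y, hy, rfl⟩
    exact ⟨(⟨y, hy⟩ : N) ^ p, pow_mem_of_isCoatom hp (hG.to_subgroup N) hM _, rfl⟩
  refine hM.1 (eq_top_iff.2 fun x _ => ?_)
  obtain ⟨y, hy, hyx⟩ := hle x.2
  rwa [← Subtype.ext hyx]

/-! ### The power series of a powerful group -/

/-- The iterated power series `G ≥ G^p ≥ (G^p)^p ≥ ⋯`. -/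
def P (p : ℕ) (G : Type*) [Group G] : ℕ → Subgroup G
  | 0 => ⊤
  | k + 1 => subgroupPow (P p G k) p

/-- Powerfulness for odd `p`, elementwise. -/
def Pow (p : ℕ) (G : Type*) [Group G] : Prop := ∀ x y : G, ⁅x, y⁆ ∈ P p G 1


theorem subgroupPow_normal {N : Subgroup G} (hN : N.Normal) (n : ℕ) :
    (subgroupPow N n).Normal := by
  constructor
  intro x hx g
  induction hx using closure_induction with
  | mem x hx =>
    obtain ⟨y, hy, rfl⟩ := hx
    rw [← conj_pow]
    exact subset_closure ⟨_, hN.conj_mem y hy g, rfl⟩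
  | one => simp
  | mul x y _ _ hx hy => rw [← conj_mul]; exact mul_mem hx hy
  | inv x _ hx => rw [← conj_inv]; exact inv_mem hx

instance P_normal (p k : ℕ) : (P p G k).Normal := by
  induction k with
  | zero => exact inferInstanceAs (⊤ : Subgroup G).Normal
  | succ k ih => exact subgroupPow_normal ih p

theorem P_anti_succ (p k : ℕ) : P p G (k + 1) ≤ P p G k := by
  refine (closure_le _).2 ?_
  rintro x ⟨y, hy, rfl⟩
  exact pow_mem hy p

theorem P_anti (p : ℕ) {k l : ℕ} (h : k ≤ l) : P p G l ≤ P p G k :=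
  antitone_nat_of_succ_le (f := P p G) (P_anti_succ p) h

theorem pow_mem_P {p k : ℕ} {x : G} (hx : x ∈ P p G k) : x ^ p ∈ P p G (k + 1) :=
  subset_closure ⟨x, hx, rfl⟩

/-- Each term of the power series is powerfully embedded in `G`. -/
theorem commutator_mem_P {p : ℕ} (hp : p.Prime) (hp2 : p ≠ 2) [Finite G] (hG : IsPGroup p G)
    (hpow : Pow p G) (k : ℕ) : ∀ x ∈ P p G k, ∀ g : G, ⁅g, x⁆ ∈ P p G (k + 1) := by
  have : Fact p.Prime := ⟨hp⟩
  have : Group.IsNilpotent G := hG.isNilpotent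
  induction k with
  | zero => intro x _ g; exact hpow g x
  | succ k ih =>
    have hle : ⁅P p G (k + 1), (⊤ : Subgroup G)⁆ ≤ P p G (k + 2) := by
      apply le_of_le_sup_commutator
      rw [commutator_le]
      intro y hy g _
      refine commutator_swap_mem (commutator_closure_mem ?_ hy g)
      rintro s ⟨x, hx, rfl⟩ g
      have hc : ⁅g, x⁆ ∈ P p G (k + 1) := ih x hx g
      have hu : ⁅⁅g, x⁆, x⁆ ∈ P p G (k + 1) := ih x hx _
      have hu' : ⁅⁅g, x⁆, x⁆ ∈ ⁅P p G (k + 1), (⊤ : Subgroup G)⁆ :=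
        commutator_mem_commutator hc (mem_top x)
      exact commutator_pow_mem hp hp2 _
        (mem_sup_right (commutator_mem_commutator hu' (mem_top _)))
        (mem_sup_right (commutator_mem_commutator hu' (mem_top _)))
        (mem_sup_left (pow_mem_P hu)) (mem_sup_left (pow_mem_P hc))
    intro x hx g
    exact commutator_swap_mem (hle (commutator_mem_commutator hx (mem_top g)))

theorem exists_P_eq_bot {p : ℕ} (hp : p.Prime) [Finite G] (hG : IsPGroup p G) :
    ∃ m, P p G m = ⊥ := by
  have key : ∀ k, P p G k = ⊥ ∨ Nat.card (P p G k) + k ≤ Nat.card G := by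
    intro k
    induction k with
    | zero => right; simpa using card_le_card_group _
    | succ k ih =>
      rcases ih with h | h
      · left
        exact le_bot_iff.1 ((P_anti_succ p k).trans h.le)
      · by_cases hb : P p G k = ⊥
        · left
          exact le_bot_iff.1 ((P_anti_succ p k).trans hb.le)
        · right
          have hlt : P p G (k + 1) < P p G k := by
            refine lt_of_le_not_ge (P_anti_succ p k) fun hge => hb ?_
            exact eq_bot_of_le_subgroupPow hp hG hge
          have hc : Nat.card (P p G (k + 1)) < Nat.card (P p G k) :=
            Set.Finite.card_lt_card (Set.toFinite _) hlt
          omega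
  refine ⟨Nat.card G, (key (Nat.card G)).resolve_right fun h => ?_⟩
  have : 0 < Nat.card (P p G (Nat.card G)) := Nat.card_pos
  omega

/-- The `p`-th power map is multiplicative modulo `P (k + 2)` when one factor lies in `P k`. -/
theorem mk_mul_pow_P {p : ℕ} (hp : p.Prime) (hp2 : p ≠ 2) [Finite G] (hG : IsPGroup p G)
    (hpow : Pow p G) {k : ℕ} (x : G) {y : G} (hy : y ∈ P p G k) :
    (((x * y) ^ p : G) : G ⧸ P p G (k + 2)) = ((x ^ p * y ^ p : G) : G ⧸ P p G (k + 2)) := by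
  have hu : ⁅x, y⁆ ∈ P p G (k + 1) := commutator_mem_P hp hp2 hG hpow k y hy x
  exact mk_mul_pow hp hp2 _
    (commutator_swap_mem (commutator_mem_P hp hp2 hG hpow _ _ hu x))
    (commutator_swap_mem (commutator_mem_P hp hp2 hG hpow _ _ hu y)) (pow_mem_P hu)

theorem exists_root_mod {p : ℕ} (hp : p.Prime) (hp2 : p ≠ 2) [Finite G] (hG : IsPGroup p G)
    (hpow : Pow p G) {k : ℕ} {w : G} (hw : w ∈ P p G (k + 1)) :
    ∃ y ∈ P p G k, ((y ^ p : G) : G ⧸ P p G (k + 2)) = (w : G ⧸ P p G (k + 2)) := by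
  induction hw using closure_induction with
  | mem x hx => obtain ⟨y, hy, rfl⟩ := hx; exact ⟨y, hy, rfl⟩
  | one => exact ⟨1, one_mem _, by simp⟩
  | mul a b _ _ ha hb =>
    obtain ⟨x, hx, hxa⟩ := ha
    obtain ⟨y, hy, hyb⟩ := hb
    refine ⟨x * y, mul_mem hx hy, ?_⟩
    rw [mk_mul_pow_P hp hp2 hG hpow x hy, QuotientGroup.mk_mul, hxa, hyb, QuotientGroup.mk_mul]
  | inv a _ ha =>
    obtain ⟨x, hx, hxa⟩ := ha
    exact ⟨x⁻¹, inv_mem hx, by rw [inv_pow, QuotientGroup.mk_inv, hxa, QuotientGroup.mk_inv]⟩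

/-- Every element of `P (j + 1)` is the `p`-th power of a single element of `P j`; the root is
found by successive approximation along the power series. -/
theorem exists_root {p : ℕ} (hp : p.Prime) (hp2 : p ≠ 2) [Finite G] (hG : IsPGroup p G)
    (hpow : Pow p G) {j : ℕ} {g : G} (hg : g ∈ P p G (j + 1)) : ∃ x ∈ P p G j, x ^ p = g := by
  have key : ∀ m, ∃ x ∈ P p G j, (x ^ p)⁻¹ * g ∈ P p G (j + m + 1) := by
    intro m
    induction m with
    | zero => exact ⟨1, one_mem _, by simpa using hg⟩
    | succ m ih =>
      obtain ⟨x, hx, hxg⟩ := ih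
      obtain ⟨y, hy, hyw⟩ := exists_root_mod hp hp2 hG hpow hxg
      refine ⟨x * y, mul_mem hx (P_anti p (by omega) hy), ?_⟩
      have h : (((x * y) ^ p : G) : G ⧸ P p G (j + m + 2)) = (g : G ⧸ P p G (j + m + 2)) := by
        rw [mk_mul_pow_P hp hp2 hG hpow x hy, QuotientGroup.mk_mul, hyw,
          ← QuotientGroup.mk_mul, mul_inv_cancel_left]
      exact QuotientGroup.eq.1 h
  obtain ⟨m, hm⟩ := exists_P_eq_bot (G := G) hp hG
  obtain ⟨x, hx, hxg⟩ := key m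
  refine ⟨x, hx, ?_⟩
  have h1 : (x ^ p)⁻¹ * g ∈ P p G m := P_anti p (by omega) hxg
  rw [hm, mem_bot] at h1
  exact inv_mul_eq_one.1 h1

theorem P_eq_subgroupPow {p : ℕ} (hp : p.Prime) (hp2 : p ≠ 2) [Finite G] (hG : IsPGroup p G)
    (hpow : Pow p G) (j : ℕ) : P p G j = subgroupPow (⊤ : Subgroup G) (p ^ j) := by
  apply le_antisymm
  · have key : ∀ g ∈ P p G j, ∃ x : G, x ^ p ^ j = g := by
      induction j with
      | zero => intro g _; exact ⟨g, by simp⟩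
      | succ j ih =>
        intro g hg
        obtain ⟨y, hy, rfl⟩ := exists_root hp hp2 hG hpow hg
        obtain ⟨x, rfl⟩ := ih y hy
        exact ⟨x, by rw [pow_succ, pow_mul]⟩
    intro g hg
    obtain ⟨x, hx⟩ := key g hg
    exact subset_closure ⟨x, mem_top x, hx⟩
  · refine (closure_le _).2 ?_
    rintro g ⟨x, -, rfl⟩
    induction j with
    | zero => exact mem_top _
    | succ j ih =>
      change x ^ p ^ (j + 1) ∈ P p G (j + 1)
      rw [pow_succ, pow_mul]
      exact pow_mem_P ih

/-! ### Elements of bounded order -/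

/-- Adjoining one element to `G^p` gives a powerful subgroup. -/
theorem pow_zpowers_sup {p : ℕ} (hp : p.Prime) (hp2 : p ≠ 2) [Finite G] (hG : IsPGroup p G)
    (hpow : Pow p G) (t : G) : Pow p (zpowers t ⊔ P p G 1 : Subgroup G) := by
  intro x y
  have hxy : ⁅(x : G), (y : G)⁆ ∈ P p G 2 := by
    rw [← commute_mk_iff]
    obtain ⟨a, ha, v, hv, hx⟩ := mem_sup_of_normal_right.1 x.2
    obtain ⟨b, hb, w, hw, hy⟩ := mem_sup_of_normal_right.1 y.2
    obtain ⟨m, rfl⟩ := mem_zpowers_iff.1 ha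
    obtain ⟨n, rfl⟩ := mem_zpowers_iff.1 hb
    have hcen : ∀ z ∈ P p G 1, ∀ g : G, Commute (g : G ⧸ P p G 2) (z : G ⧸ P p G 2) :=
      fun z hz g => commute_mk_iff.2 (commutator_mem_P hp hp2 hG hpow 1 z hz g)
    rw [← hx, ← hy, QuotientGroup.mk_mul, QuotientGroup.mk_mul]
    refine Commute.mul_left (Commute.mul_right ?_ (hcen w hw _))
      (Commute.mul_right (hcen v hv _).symm (hcen w hw _))
    rw [QuotientGroup.mk_zpow, QuotientGroup.mk_zpow]
    exact (Commute.refl _).zpow_zpow m n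
  obtain ⟨z, hz, hzxy⟩ := exists_root hp hp2 hG hpow hxy
  exact subset_closure ⟨⟨z, mem_sup_right hz⟩, mem_top _, Subtype.ext hzxy⟩

/-- The elements of order dividing `p ^ n` are closed under multiplication, for every `n`. -/
def MulClosed (p : ℕ) (G : Type*) [Group G] : Prop :=
  ∀ (n : ℕ) (x y : G), x ^ p ^ n = 1 → y ^ p ^ n = 1 → (x * y) ^ p ^ n = 1

theorem commutator_pow_swap {m : ℕ} {x y : G} (h : ⁅x, y⁆ ^ m = 1) : ⁅y, x⁆ ^ m = 1 := by
  rw [← commutatorElement_inv, inv_pow, h, inv_one]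

theorem conj_pow_eq_one {m : ℕ} {x : G} (h : x ^ m = 1) (g : G) : (g * x * g⁻¹) ^ m = 1 := by
  rw [conj_pow, h]; group

theorem pow_pow_eq_one_of_le {p m n : ℕ} {x : G} (h : x ^ p ^ m = 1) (hmn : m ≤ n) :
    x ^ p ^ n = 1 := by
  obtain ⟨l, rfl⟩ := Nat.exists_eq_add_of_le hmn
  rw [pow_add, pow_mul, h, one_pow]

theorem pow_pow_succ_iff {p n : ℕ} {x : G} : x ^ p ^ (n + 1) = 1 ↔ (x ^ p) ^ p ^ n = 1 := by
  rw [pow_succ', pow_mul]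

theorem mul_pow_eq_one_of_mem {p : ℕ} {K : Subgroup G} (hK : MulClosed p K) {n : ℕ} {x y : G}
    (hxK : x ∈ K) (hyK : y ∈ K) (hx : x ^ p ^ n = 1) (hy : y ^ p ^ n = 1) :
    (x * y) ^ p ^ n = 1 :=
  congrArg Subtype.val (hK n ⟨x, hxK⟩ ⟨y, hyK⟩ (Subtype.ext hx) (Subtype.ext hy))

/-- The elements of `G^p` of order dividing `p ^ n`, as a subgroup. -/
def W {p : ℕ} (hA : ∀ t : G, MulClosed p (zpowers t ⊔ P p G 1 : Subgroup G)) (n : ℕ) :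
    Subgroup G where
  carrier := {x | x ∈ P p G 1 ∧ x ^ p ^ n = 1}
  one_mem' := ⟨one_mem _, one_pow _⟩
  mul_mem' hx hy := ⟨mul_mem hx.1 hy.1, mul_pow_eq_one_of_mem (hA 1) (mem_sup_right hx.1)
    (mem_sup_right hy.1) hx.2 hy.2⟩
  inv_mem' hx := ⟨inv_mem hx.1, by rw [inv_pow, hx.2, inv_one]⟩

instance W_normal {p : ℕ} (hA : ∀ t : G, MulClosed p (zpowers t ⊔ P p G 1 : Subgroup G))
    (n : ℕ) : (W hA n).Normal :=
  ⟨fun x hx g => ⟨(P_normal p 1).conj_mem x hx.1 g, conj_pow_eq_one hx.2 g⟩⟩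

/-- `⁅g, t⁆` is the product of a conjugate of `t` and `t⁻¹`, both lying in `⟨t⟩ G^p`. -/
theorem commutator_pow_eq_one {p : ℕ} (hpow : Pow p G)
    (hA : ∀ t : G, MulClosed p (zpowers t ⊔ P p G 1 : Subgroup G)) {n : ℕ} {t : G}
    (ht : t ^ p ^ n = 1) (g : G) : ⁅g, t⁆ ^ p ^ n = 1 := by
  have h1 : t ∈ zpowers t ⊔ P p G 1 := mem_sup_left (mem_zpowers t)
  have h2 : g * t * g⁻¹ ∈ zpowers t ⊔ P p G 1 := by
    have h : g * t * g⁻¹ = ⁅g, t⁆ * t := by rw [commutatorElement_def]; group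
    rw [h]
    exact mul_mem (mem_sup_right (hpow g t)) h1
  rw [commutatorElement_def]
  exact mul_pow_eq_one_of_mem (hA t) h2 (inv_mem h1) (conj_pow_eq_one ht g)
    (by rw [inv_pow, ht, inv_one])

/-- The key commutator estimate: if `x ∈ G^{p^{k+1}}` has order dividing `p ^ (n + 1)` and `t` has
order dividing `p ^ (n + k + 1)`, then `⁅t, x⁆` has order dividing `p ^ n`. The induction is downward on `n` and, for fixed `n`, downward on `k`. -/
theorem commutator_estimate {p : ℕ} (hp : p.Prime) (hp2 : p ≠ 2) [Finite G] (hG : IsPGroup p G)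
    (hpow : Pow p G) (hA : ∀ t : G, MulClosed p (zpowers t ⊔ P p G 1 : Subgroup G)) (n k : ℕ) :
    ∀ x ∈ P p G (k + 1), x ^ p ^ (n + 1) = 1 → ∀ t : G, t ^ p ^ (n + k + 1) = 1 →
      ⁅t, x⁆ ^ p ^ n = 1 := by
  obtain ⟨e, he⟩ := isPGroup_iff_exists_pow_pow_eq_one.1 hG
  obtain ⟨m, hm⟩ := exists_P_eq_bot (G := G) hp hG
  obtain ⟨s, hs⟩ : ∃ s, e ≤ n + s := ⟨e, by omega⟩
  induction s generalizing n k with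
  | zero => intro x _ _ t _; exact pow_pow_eq_one_of_le (he _) (by omega)
  | succ s ihn =>
    obtain ⟨r, hr⟩ : ∃ r, m ≤ k + 1 + r := ⟨m, by omega⟩
    induction r generalizing k with
    | zero =>
      intro x hx _ t _
      have hx1 : x ∈ P p G m := P_anti p (by omega) hx
      rw [hm, mem_bot] at hx1
      rw [hx1, commutatorElement_one_right, one_pow]
    | succ r ihk =>
      intro x hx hxn t ht
      obtain ⟨d, hd, rfl⟩ := exists_root hp hp2 hG hpow hx
      rw [← pow_pow_succ_iff] at hxn
      have hcP : ⁅t, d⁆ ∈ P p G (k + 1) := commutator_mem_P hp hp2 hG hpow k d hd t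
      have hc : ⁅t, d⁆ ^ p ^ (n + 1) = 1 := by
        rcases k with _ | k
        · exact commutator_pow_swap (commutator_pow_eq_one hpow hA ht d)
        · exact ihn (n + 1) k (by omega) d hd hxn t
            (by rwa [show n + 1 + k + 1 = n + (k + 1) + 1 by omega])
      have huP : ⁅⁅t, d⁆, d⁆ ∈ P p G (k + 1 + 1) :=
        commutator_swap_mem (commutator_mem_P hp hp2 hG hpow _ _ hcP d)
      have hu : ⁅⁅t, d⁆, d⁆ ^ p ^ (n + 1) = 1 :=
        commutator_pow_swap (commutator_pow_eq_one hpow hA hc d)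
      -- One more commutator with `d` or `⁅t, d⁆` lowers the exponent, by the case `k + 1`.
      have hlow : ∀ y : G, y ^ p ^ (n + (k + 1) + 1) = 1 → ⁅⁅⁅t, d⁆, d⁆, y⁆ ∈ W hA n :=
        fun y hy => ⟨hpow _ _, commutator_pow_swap (ihk (k + 1) (by omega) _ huP hu y hy)⟩
      have hmem : ⁅t, d ^ p⁆ ∈ W hA n := commutator_pow_mem hp hp2 (W hA n)
        (hlow _ (pow_pow_eq_one_of_le hc (by omega)))
        (hlow _ (pow_pow_eq_one_of_le hxn (by omega)))
        ⟨pow_mem (P_anti p (by omega) huP) p, pow_pow_succ_iff.1 hu⟩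
        ⟨pow_mem (P_anti p (by omega) hcP) p, pow_pow_succ_iff.1 hc⟩
      exact hmem.2

theorem mulClosed_of_zpowers_sup {p : ℕ} (hp : p.Prime) (hp2 : p ≠ 2) [Finite G]
    (hG : IsPGroup p G) (hpow : Pow p G)
    (hA : ∀ t : G, MulClosed p (zpowers t ⊔ P p G 1 : Subgroup G)) : MulClosed p G := by
  have hP1 : ∀ {n : ℕ} {x w : G}, x ^ p ^ n = 1 → w ∈ W hA n → (x * w) ^ p ^ n = 1 :=
    fun {n x w} hx hw => mul_pow_eq_one_of_mem (hA x) (mem_sup_left (mem_zpowers x))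
      (mem_sup_right hw.1) hx hw.2
  intro n
  induction n with
  | zero => intro x y hx hy; simp_all
  | succ n ih =>
    intro x y hx hy
    have hcP : ⁅x, y⁆ ∈ P p G (0 + 1) := hpow x y
    have hc : ⁅x, y⁆ ^ p ^ (n + 1) = 1 := commutator_pow_eq_one hpow hA hy x
    have hlow : ∀ z : G, z ^ p ^ (n + 1) = 1 → ⁅⁅x, y⁆, z⁆ ∈ W hA n := fun z hz =>
      ⟨hpow _ _, commutator_pow_swap
        (commutator_estimate hp hp2 hG hpow hA n 0 _ hcP hc z hz)⟩
    have h := mk_mul_pow hp hp2 (W hA n) (hlow x hx) (hlow y hy)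
      ⟨pow_mem hcP p, pow_pow_succ_iff.1 hc⟩
    have hw : (x ^ p * y ^ p)⁻¹ * (x * y) ^ p ∈ W hA n := QuotientGroup.eq.1 h.symm
    rw [pow_pow_succ_iff] at hx hy ⊢
    have := hP1 (ih _ _ hx hy) hw
    rwa [mul_inv_cancel_left] at this

/-- In a powerful `p`-group with `p` odd, `Ω_n(G)` is the set of elements of order dividing
`p ^ n`. -/
theorem mulClosed {p : ℕ} (hp : p.Prime) (hp2 : p ≠ 2) (N : ℕ) :
    ∀ (G : Type*) [Group G] [Finite G], Nat.card G ≤ N → IsPGroup p G → Pow p G →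
      MulClosed p G := by
  induction N with
  | zero => intro G _ _ hN; exact absurd hN (by simp [Nat.card_pos.ne'])
  | succ N ih =>
    intro G _ _ hN hG hpow
    by_cases htop : ∃ t : G, zpowers t ⊔ P p G 1 = ⊤
    · -- Here `G` is cyclic, since `G^p` lies in every maximal subgroup.
      obtain ⟨t, ht⟩ := htop
      have hcyc : zpowers t = ⊤ := by
        by_contra hne
        obtain ⟨M, hM, hle⟩ := (eq_top_or_exists_le_coatom (zpowers t)).resolve_left hne
        refine hM.1 (top_le_iff.1 (ht ▸ sup_le hle ((closure_le _).2 ?_)))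
        rintro x ⟨y, -, rfl⟩
        exact pow_mem_of_isCoatom hp hG hM y
      intro n x y hx hy
      obtain ⟨a, rfl⟩ := mem_zpowers_iff.1 (hcyc ▸ mem_top x : x ∈ zpowers t)
      obtain ⟨b, rfl⟩ := mem_zpowers_iff.1 (hcyc ▸ mem_top y : y ∈ zpowers t)
      rw [((Commute.refl t).zpow_zpow a b).mul_pow, hx, hy, one_mul]
    · refine mulClosed_of_zpowers_sup hp hp2 hG hpow fun t => ?_
      refine ih _ ?_ (hG.to_subgroup _) (pow_zpowers_sup hp hp2 hG hpow t)
      by_contra hlt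
      refine htop ⟨t, eq_top_of_card_eq _ (le_antisymm (card_le_card_group _) ?_)⟩
      omega

end PowerfulOmega

open PowerfulOmega

theorem omega_statement_12 (p : ℕ) (hp : p.Prime) (hp2 : p ≠ 2) (G : Type*) [Group G]
    [Finite G] (hG : IsPGroup p G) (hpow : IsPowerful p G) (i j : ℕ) (hi : 1 ≤ i)
    (hj : 1 ≤ j) :
    ⁅omegaSubgroup p i (subgroupPow (⊤ : Subgroup G) (p ^ j)),
        omegaSubgroup p i (subgroupPow (⊤ : Subgroup G) (p ^ j))⁆ ≤
      subgroupPow (omegaSubgroup p i (subgroupPow (⊤ : Subgroup G) (p ^ j))) p := by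
  have hpow' : Pow p G := by
    intro x y
    rw [IsPowerful, if_neg hp2, commutator_def] at hpow
    exact hpow (Subgroup.commutator_mem_commutator (Subgroup.mem_top x) (Subgroup.mem_top y))
  have hcl : MulClosed p G := mulClosed hp hp2 _ G le_rfl hG hpow'
  have hA : ∀ t : G, MulClosed p (Subgroup.zpowers t ⊔ P p G 1 : Subgroup G) :=
    fun t => mulClosed hp hp2 _ _ le_rfl (hG.to_subgroup _) (pow_zpowers_sup hp hp2 hG hpow' t)
  rw [← P_eq_subgroupPow hp hp2 hG hpow' j]
  have hmem : ∀ x ∈ omegaSubgroup p i (P p G j), x ∈ P p G j ∧ x ^ p ^ i = 1 := by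
    intro x hx
    induction hx using Subgroup.closure_induction with
    | mem x hx => exact hx
    | one => exact ⟨one_mem _, one_pow _⟩
    | mul x y _ _ hx hy => exact ⟨mul_mem hx.1 hy.1, hcl i x y hx.2 hy.2⟩
    | inv x _ hx => exact ⟨inv_mem hx.1, by rw [inv_pow, hx.2, inv_one]⟩
  obtain ⟨i, rfl⟩ := Nat.exists_eq_add_of_le' hi
  obtain ⟨j, rfl⟩ := Nat.exists_eq_add_of_le' hj
  rw [Subgroup.commutator_le]
  intro x hx y hy
  obtain ⟨hxP, hxi⟩ := hmem x hx
  obtain ⟨hyP, hyi⟩ := hmem y hy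
  have hP := commutator_mem_P hp hp2 hG hpow' (j + 1) y hyP x
  have hord := commutator_estimate hp hp2 hG hpow' hA i j y hyP hyi x
    (pow_pow_eq_one_of_le hxi (by omega))
  obtain ⟨z, hz, hzxy⟩ := exists_root hp hp2 hG hpow' hP
  refine Subgroup.subset_closure ⟨z, Subgroup.subset_closure ⟨hz, ?_⟩, hzxy⟩
  rw [pow_pow_succ_iff, hzxy]
  exact hord
end

section
/- There exists a finite powerful 2-group G such that the subgroup Ω₂(G²) is not abelian, and hence is not powerful. (For instance, G of order 2¹¹ with presentation ⟨a, b, c ∣ a^{2³} = b^{2³} = c^{2⁵} = 1, [a,c] = [b,c] = 1, [a,b] = c^{2²}⟩ works.) -/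
namespace OmegaExample

/-- Multiplication by `4`, as an additive map `ℤ/8 → ℤ/32`. -/
def theta : ZMod 8 →+ ZMod 32 where
  toFun x := ((4 * x.val : ℕ) : ZMod 32)
  map_zero' := by decide
  map_add' := by decide

/-- The underlying set of the group: `⟨i, j, k⟩` stands for `a ^ i * b ^ j * c ^ k`. -/
@[ext]
structure Grp where
  /-- the exponent of `a` -/
  a : ZMod 8
  /-- the exponent of `b` -/
  b : ZMod 8
  /-- the exponent of the central element `c` -/
  c : ZMod 32

namespace Grp

instance : Mul Grp := ⟨fun x y => ⟨x.a + y.a, x.b + y.b, x.c + y.c + theta (x.b * y.a)⟩⟩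
instance : One Grp := ⟨⟨0, 0, 0⟩⟩
instance : Inv Grp := ⟨fun x => ⟨-x.a, -x.b, -x.c + theta (x.b * x.a)⟩⟩

@[simp] lemma mul_a (x y : Grp) : (x * y).a = x.a + y.a := rfl
@[simp] lemma mul_b (x y : Grp) : (x * y).b = x.b + y.b := rfl
@[simp] lemma mul_c (x y : Grp) : (x * y).c = x.c + y.c + theta (x.b * y.a) := rfl
@[simp] lemma one_a : (1 : Grp).a = 0 := rfl
@[simp] lemma one_b : (1 : Grp).b = 0 := rfl
@[simp] lemma one_c : (1 : Grp).c = 0 := rfl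
@[simp] lemma inv_a (x : Grp) : (x⁻¹).a = -x.a := rfl
@[simp] lemma inv_b (x : Grp) : (x⁻¹).b = -x.b := rfl
@[simp] lemma inv_c (x : Grp) : (x⁻¹).c = -x.c + theta (x.b * x.a) := rfl

instance : Group Grp := Group.ofLeftAxioms
  (by
    intro x y z
    ext <;> simp only [mul_a, mul_b, mul_c, add_mul, mul_add, map_add] <;> ring)
  (by intro x; ext <;> simp)
  (by intro x; ext <;> simp)

/-- The coordinates identify the group, as a set, with a product of cyclic groups. -/
def equivProd : Grp ≃ ZMod 8 × ZMod 8 × ZMod 32 where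
  toFun x := (x.a, x.b, x.c)
  invFun t := ⟨t.1, t.2.1, t.2.2⟩
  left_inv _ := rfl
  right_inv _ := rfl

instance : Finite Grp := Finite.of_equiv _ equivProd.symm

lemma card_eq : Nat.card Grp = 2 ^ 11 := by
  rw [Nat.card_congr equivProd]
  simp

lemma sq_eq (x : Grp) : x ^ 2 = ⟨2 * x.a, 2 * x.b, 2 * x.c + theta (x.b * x.a)⟩ := by
  rw [pow_two]
  ext <;> simp only [mul_a, mul_b, mul_c] <;> ring

lemma pow_four_eq (x : Grp) :
    x ^ 4 = ⟨4 * x.a, 4 * x.b, 4 * x.c + theta (6 * (x.b * x.a))⟩ := by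
  have h : theta (6 * (x.b * x.a)) = 2 * theta (x.b * x.a) + theta (2 * x.b * (2 * x.a)) := by
    rw [show 6 * (x.b * x.a) = x.b * x.a + x.b * x.a + 2 * x.b * (2 * x.a) by ring,
      map_add, map_add]
    ring
  rw [show x ^ 4 = (x ^ 2) ^ 2 from pow_mul x 2 2, sq_eq, sq_eq, h]
  ext <;> simp only <;> ring

lemma theta_eq (z : ZMod 8) : theta z = 4 * (z.val : ZMod 32) := by
  revert z; decide

lemma isPowerful : IsPowerful 2 Grp := by
  rw [IsPowerful, if_pos rfl, commutator_def, Subgroup.commutator_le]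
  intro x _ y _
  -- `⁅x, y⁆ = c ^ (4 z)` with `z` the determinant of the `a`- and `b`-coordinates
  refine Subgroup.subset_closure
    ⟨⟨0, 0, ((x.b * y.a - y.b * x.a).val : ZMod 32)⟩, trivial, ?_⟩
  rw [pow_four_eq]
  ext
  · simp [commutatorElement_def]
  · simp [commutatorElement_def]
  · simp only [← theta_eq, commutatorElement_def, mul_b, mul_c, inv_a, inv_b, inv_c,
      mul_zero, map_zero, add_zero, add_mul, mul_neg, neg_mul, map_add, map_neg, map_sub]
    ring

/-- Triples all of whose coordinates are even: a subgroup containing `G²`. -/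
def evenSubgroup : Subgroup Grp where
  carrier := {x | (∃ i, x.a = 2 * i) ∧ (∃ j, x.b = 2 * j) ∧ ∃ k, x.c = 2 * k}
  one_mem' := ⟨⟨0, by simp⟩, ⟨0, by simp⟩, ⟨0, by simp⟩⟩
  mul_mem' := by
    rintro x y ⟨⟨i, hi⟩, ⟨j, hj⟩, ⟨k, hk⟩⟩ ⟨⟨i', hi'⟩, ⟨j', hj'⟩, ⟨k', hk'⟩⟩
    refine ⟨⟨i + i', ?_⟩, ⟨j + j', ?_⟩,
      ⟨k + k' + 2 * ((x.b * y.a).val : ZMod 32), ?_⟩⟩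
    · rw [mul_a, hi, hi']; ring
    · rw [mul_b, hj, hj']; ring
    · rw [mul_c, theta_eq, hk, hk']; ring
  inv_mem' := by
    rintro x ⟨⟨i, hi⟩, ⟨j, hj⟩, ⟨k, hk⟩⟩
    refine ⟨⟨-i, ?_⟩, ⟨-j, ?_⟩, ⟨-k + 2 * ((x.b * x.a).val : ZMod 32), ?_⟩⟩
    · rw [inv_a, hi]; ring
    · rw [inv_b, hj]; ring
    · rw [inv_c, theta_eq, hk]; ring

lemma theta_four_mul (z : ZMod 8) : ∃ k, theta (4 * z) = 8 * k := by
  revert z; decide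

/-- Triples with coordinates divisible by `2`, `2`, `8`: a subgroup of exponent `4` containing
`Ω₂(G²)`. -/
def smallSubgroup : Subgroup Grp where
  carrier := {x | (∃ i, x.a = 2 * i) ∧ (∃ j, x.b = 2 * j) ∧ ∃ k, x.c = 8 * k}
  one_mem' := ⟨⟨0, by simp⟩, ⟨0, by simp⟩, ⟨0, by simp⟩⟩
  mul_mem' := by
    rintro x y ⟨⟨i, hi⟩, ⟨j, hj⟩, ⟨k, hk⟩⟩ ⟨⟨i', hi'⟩, ⟨j', hj'⟩, ⟨k', hk'⟩⟩
    obtain ⟨l, hl⟩ := theta_four_mul (j * i')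
    refine ⟨⟨i + i', ?_⟩, ⟨j + j', ?_⟩, ⟨k + k' + l, ?_⟩⟩
    · rw [mul_a, hi, hi']; ring
    · rw [mul_b, hj, hj']; ring
    · rw [mul_c, hj, hi', show 2 * j * (2 * i') = 4 * (j * i') by ring, hl, hk, hk']; ring
  inv_mem' := by
    rintro x ⟨⟨i, hi⟩, ⟨j, hj⟩, ⟨k, hk⟩⟩
    obtain ⟨l, hl⟩ := theta_four_mul (j * i)
    refine ⟨⟨-i, ?_⟩, ⟨-j, ?_⟩, ⟨-k + l, ?_⟩⟩
    · rw [inv_a, hi]; ring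
    · rw [inv_b, hj]; ring
    · rw [inv_c, hj, hi, show 2 * j * (2 * i) = 4 * (j * i) by ring, hl, hk]; ring

lemma pow_four_of_even {x : Grp} (hx : x ∈ evenSubgroup) :
    x ^ 4 = ⟨0, 0, 4 * x.c⟩ := by
  obtain ⟨⟨i, hi⟩, ⟨j, hj⟩, -⟩ := hx
  have h8 : (8 : ZMod 8) = 0 := by decide
  rw [pow_four_eq, hi, hj]
  ext
  · linear_combination i * h8
  · linear_combination j * h8
  · have : 6 * (2 * j * (2 * i)) = (0 : ZMod 8) := by linear_combination 3 * j * i * h8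
    simp only [this, map_zero, add_zero]

lemma smallSubgroup_le : smallSubgroup ≤ evenSubgroup := by
  rintro x ⟨hi, hj, ⟨k, hk⟩⟩
  exact ⟨hi, hj, ⟨4 * k, by rw [hk]; ring⟩⟩

lemma pow_four_of_small {x : Grp} (hx : x ∈ smallSubgroup) : x ^ 4 = 1 := by
  rw [pow_four_of_even (smallSubgroup_le hx)]
  obtain ⟨-, -, ⟨k, hk⟩⟩ := hx
  have h32 : (32 : ZMod 32) = 0 := by decide
  ext
  · rfl
  · rfl
  · change 4 * x.c = 0
    rw [hk]
    linear_combination k * h32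

lemma squares_le : subgroupPow (⊤ : Subgroup Grp) 2 ≤ evenSubgroup := by
  refine (Subgroup.closure_le _).2 ?_
  rintro _ ⟨x, -, rfl⟩
  rw [sq_eq]
  exact ⟨⟨_, rfl⟩, ⟨_, rfl⟩, ⟨x.c + 2 * ((x.b * x.a).val : ZMod 32), by
    simp only [theta_eq]; ring⟩⟩

lemma dvd_eight_of_four_mul : ∀ c : ZMod 32, 4 * c = 0 → ∃ k, c = 8 * k := by
  decide

lemma omega_le : omegaSubgroup 2 2 (subgroupPow (⊤ : Subgroup Grp) 2) ≤ smallSubgroup := by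
  refine (Subgroup.closure_le _).2 ?_
  rintro x ⟨hx, h4⟩
  have hev := squares_le hx
  rw [show 2 ^ 2 = 4 from rfl, pow_four_of_even hev] at h4
  exact ⟨hev.1, hev.2.1, dvd_eight_of_four_mul _ (congrArg Grp.c h4)⟩

lemma mem_omega_of_sq {x : Grp} (hx : x ^ 2 ∈ smallSubgroup) :
    x ^ 2 ∈ omegaSubgroup 2 2 (subgroupPow (⊤ : Subgroup Grp) 2) :=
  Subgroup.subset_closure ⟨Subgroup.subset_closure ⟨x, trivial, rfl⟩, pow_four_of_small hx⟩

lemma a_sq_mem : (⟨1, 0, 0⟩ : Grp) ^ 2 ∈ omegaSubgroup 2 2 (subgroupPow (⊤ : Subgroup Grp) 2) :=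
  mem_omega_of_sq (by rw [sq_eq]; exact ⟨⟨1, rfl⟩, ⟨0, rfl⟩, ⟨0, by decide⟩⟩)

lemma b_sq_mem : (⟨0, 1, 0⟩ : Grp) ^ 2 ∈ omegaSubgroup 2 2 (subgroupPow (⊤ : Subgroup Grp) 2) :=
  mem_omega_of_sq (by rw [sq_eq]; exact ⟨⟨0, rfl⟩, ⟨1, rfl⟩, ⟨0, by decide⟩⟩)

lemma not_commute :
    (⟨1, 0, 0⟩ : Grp) ^ 2 * ⟨0, 1, 0⟩ ^ 2 ≠ ⟨0, 1, 0⟩ ^ 2 * ⟨1, 0, 0⟩ ^ 2 := by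
  intro h
  have hc := congrArg Grp.c h
  simp only [sq_eq, mul_c] at hc
  revert hc
  decide

end Grp

end OmegaExample

open OmegaExample
theorem omega_statement_13 :
    ∃ (G : Type) (_ : Group G) (_ : Finite G),
      IsPGroup 2 G ∧ IsPowerful 2 G ∧
      ¬(∀ x ∈ omegaSubgroup 2 2 (subgroupPow (⊤ : Subgroup G) 2),
          ∀ y ∈ omegaSubgroup 2 2 (subgroupPow (⊤ : Subgroup G) 2), x * y = y * x) ∧
      ¬IsPowerful 2 ↥(omegaSubgroup 2 2 (subgroupPow (⊤ : Subgroup G) 2)) := by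
  refine ⟨Grp, inferInstance, inferInstance, IsPGroup.of_card Grp.card_eq, Grp.isPowerful,
    fun h => Grp.not_commute (h _ Grp.a_sq_mem _ Grp.b_sq_mem), fun h => ?_⟩
  rw [IsPowerful, if_pos rfl] at h
  have hbot : subgroupPow
      (⊤ : Subgroup ↥(omegaSubgroup 2 2 (subgroupPow (⊤ : Subgroup Grp) 2))) 4 ≤ ⊥ := by
    refine (Subgroup.closure_le _).2 ?_
    rintro _ ⟨x, -, rfl⟩
    exact Subgroup.mem_bot.2 (Subtype.ext (Grp.pow_four_of_small (Grp.omega_le x.2)))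
  have hmem := hbot (h (Subgroup.commutator_mem_commutator
    (Subgroup.mem_top ⟨_, Grp.a_sq_mem⟩) (Subgroup.mem_top ⟨_, Grp.b_sq_mem⟩)))
  have hcomm := commutatorElement_eq_one_iff_mul_comm.1 (Subgroup.mem_bot.1 hmem)
  exact Grp.not_commute (congrArg Subtype.val hcomm)
end

section
/- For every odd prime p there exists a finite powerful p-group G such that Ω₂(G^p) is not abelian, so Ω₂(G^p) has powerful nilpotency class exactly 2; in particular the bound "powerful nilpotency class of Ω_i(G^p) is at most i" is attained for i = 2. (For instance, G of order p¹¹ with presentation ⟨a, b, c ∣ a^{p³} = b^{p³} = c^{p⁵} = 1, [a,c] = [b,c] = 1, [a,b] = c^{p²}⟩ works.) -/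
open scoped commutatorElement

/-- Multiplication by `p²`, as an additive homomorphism `ℤ/p³ → ℤ/p⁵`. -/
def mulSq (p : ℕ) : ZMod (p ^ 3) →+ ZMod (p ^ 5) :=
  ZMod.lift (p ^ 3) ⟨(AddMonoidHom.mulLeft ((p : ZMod (p ^ 5)) ^ 2)).comp
    (Int.castAddHom (ZMod (p ^ 5))), by
      have h : ((p ^ 5 : ℕ) : ZMod (p ^ 5)) = 0 := ZMod.natCast_self _
      push_cast at h
      simp only [AddMonoidHom.comp_apply, Int.coe_castAddHom, AddMonoidHom.coe_mulLeft]
      push_cast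
      rw [← pow_add, h]⟩

lemma mulSq_intCast (p : ℕ) (k : ℤ) : mulSq p (k : ZMod (p ^ 3)) = (p : ZMod (p ^ 5)) ^ 2 * k := by
  simp [mulSq]

/-- The group of order `p¹¹` with underlying set `ℤ/p³ × ℤ/p³ × ℤ/p⁵`; the triple `(x, y, z)`
stands for `b^y a^x c^z`. -/
@[ext]
structure HeisGroup (p : ℕ) where
  /-- The exponent of `a`. -/
  x : ZMod (p ^ 3)
  /-- The exponent of `b`. -/
  y : ZMod (p ^ 3)
  /-- The exponent of `c`. -/
  z : ZMod (p ^ 5)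

namespace HeisGroup

variable {p : ℕ}

instance : Mul (HeisGroup p) := ⟨fun g h => ⟨g.x + h.x, g.y + h.y, g.z + h.z + mulSq p (g.x * h.y)⟩⟩
instance : One (HeisGroup p) := ⟨⟨0, 0, 0⟩⟩
instance : Inv (HeisGroup p) := ⟨fun g => ⟨-g.x, -g.y, -g.z + mulSq p (g.x * g.y)⟩⟩

@[simp] lemma mul_x (g h : HeisGroup p) : (g * h).x = g.x + h.x := rfl
@[simp] lemma mul_y (g h : HeisGroup p) : (g * h).y = g.y + h.y := rfl
@[simp] lemma mul_z (g h : HeisGroup p) : (g * h).z = g.z + h.z + mulSq p (g.x * h.y) := rfl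
@[simp] lemma one_x : (1 : HeisGroup p).x = 0 := rfl
@[simp] lemma one_y : (1 : HeisGroup p).y = 0 := rfl
@[simp] lemma one_z : (1 : HeisGroup p).z = 0 := rfl
@[simp] lemma inv_x (g : HeisGroup p) : (g⁻¹).x = -g.x := rfl
@[simp] lemma inv_y (g : HeisGroup p) : (g⁻¹).y = -g.y := rfl
@[simp] lemma inv_z (g : HeisGroup p) : (g⁻¹).z = -g.z + mulSq p (g.x * g.y) := rfl

instance : Group (HeisGroup p) := Group.ofLeftAxioms
  (fun g h k => by
    ext
    · simp [add_assoc]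
    · simp [add_assoc]
    · simp only [mul_x, mul_y, mul_z, add_mul, mul_add, map_add]; abel)
  (fun g => by ext <;> simp)
  (fun g => by ext <;> simp)

lemma commutator_eq (g h : HeisGroup p) :
    ⁅g, h⁆ = ⟨0, 0, mulSq p (g.x * h.y - h.x * g.y)⟩ := by
  rw [commutatorElement_def]
  ext
  · simp
  · simp
  · simp only [mul_x, mul_z, inv_x, inv_y, inv_z, add_mul, mul_neg, neg_mul,
      map_add, map_neg, map_sub]
    abel

@[simp] lemma pow_x (g : HeisGroup p) (n : ℕ) : (g ^ n).x = n * g.x := by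
  induction n with
  | zero => simp
  | succ n ih => simp [pow_succ, ih, add_mul]

@[simp] lemma pow_y (g : HeisGroup p) (n : ℕ) : (g ^ n).y = n * g.y := by
  induction n with
  | zero => simp
  | succ n ih => simp [pow_succ, ih, add_mul]

lemma pow_z (g : HeisGroup p) (hg : g.x * g.y = 0) (n : ℕ) : (g ^ n).z = n * g.z := by
  induction n with
  | zero => simp
  | succ n ih => simp [pow_succ, ih, add_mul, mul_assoc, hg]

lemma pow_eq (g : HeisGroup p) (hg : g.x * g.y = 0) (n : ℕ) :
    g ^ n = ⟨n * g.x, n * g.y, n * g.z⟩ := by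
  ext
  · simp
  · simp
  · simp [pow_z g hg]

/-- `HeisGroup p` as a product set. -/
def equivProd (p : ℕ) : HeisGroup p ≃ ZMod (p ^ 3) × ZMod (p ^ 3) × ZMod (p ^ 5) where
  toFun g := (g.x, g.y, g.z)
  invFun t := ⟨t.1, t.2.1, t.2.2⟩
  left_inv _ := rfl
  right_inv _ := rfl

lemma card_eq (p : ℕ) : Nat.card (HeisGroup p) = p ^ 11 := by
  rw [Nat.card_congr (equivProd p), Nat.card_prod, Nat.card_prod, Nat.card_zmod, Nat.card_zmod]
  ring

lemma natCast_pow_three (p : ℕ) : (p : ZMod (p ^ 3)) ^ 3 = 0 := by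
  exact_mod_cast ZMod.natCast_self (p ^ 3)

lemma natCast_pow_five (p : ℕ) : (p : ZMod (p ^ 5)) ^ 5 = 0 := by
  exact_mod_cast ZMod.natCast_self (p ^ 5)

lemma isPowerful (hp2 : p ≠ 2) : IsPowerful p (HeisGroup p) := by
  rw [IsPowerful, if_neg hp2, commutator_def, Subgroup.commutator_le]
  intro g _ h _
  obtain ⟨k, hk⟩ := ZMod.intCast_surjective (g.x * h.y - h.x * g.y)
  refine Subgroup.subset_closure ⟨⟨0, 0, p * k⟩, trivial, ?_⟩
  rw [commutator_eq, ← hk, mulSq_intCast, pow_eq _ (by simp)]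
  ext
  · simp
  · simp
  · simp only; ring

/-- The subgroup `Ω₂(G^p)` of `G = HeisGroup p`. -/
abbrev omega (p : ℕ) : Subgroup (HeisGroup p) :=
  omegaSubgroup p 2 (subgroupPow (⊤ : Subgroup (HeisGroup p)) p)

lemma omega_le_pow : omega p ≤ subgroupPow ⊤ p := by
  rw [omega, omegaSubgroup, Subgroup.closure_le]
  exact fun _ h => h.1

lemma exists_of_mem_omega {g : HeisGroup p} (hg : g ∈ omega p) :
    ∃ a b : ZMod (p ^ 3), g.x = (p : ZMod (p ^ 3)) * a ∧ g.y = (p : ZMod (p ^ 3)) * b := by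
  have hg' := omega_le_pow hg
  clear hg
  rw [subgroupPow] at hg'
  induction hg' using Subgroup.closure_induction with
  | mem g h =>
    obtain ⟨h, -, rfl⟩ := h
    exact ⟨h.x, h.y, by simp, by simp⟩
  | one => exact ⟨0, 0, by simp, by simp⟩
  | mul g h _ _ ig ih =>
    obtain ⟨a, b, ha, hb⟩ := ig
    obtain ⟨a', b', ha', hb'⟩ := ih
    exact ⟨a + a', b + b', by simp [ha, ha', mul_add], by simp [hb, hb', mul_add]⟩
  | inv g _ ig =>
    obtain ⟨a, b, ha, hb⟩ := ig
    exact ⟨-a, -b, by simp [ha], by simp [hb]⟩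

/-- `p`-th powers `(p a, p b, p c)` with `a b = 0` and `p³ c = 0` lie in `Ω₂(G^p)`. -/
lemma mem_omega (g : HeisGroup p) (hg : g.x * g.y = 0) (hz : (p : ZMod (p ^ 5)) ^ 3 * g.z = 0) :
    (⟨p * g.x, p * g.y, p * g.z⟩ : HeisGroup p) ∈ omega p := by
  rw [← pow_eq g hg]
  refine Subgroup.subset_closure ⟨Subgroup.subset_closure ⟨g, trivial, rfl⟩, ?_⟩
  rw [← pow_mul, pow_eq g hg]
  have h3 := natCast_pow_three p
  ext
  · simp only [one_x]; push_cast; linear_combination g.x * h3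
  · simp only [one_y]; push_cast; linear_combination g.y * h3
  · simp only [one_z]; push_cast; linear_combination hz

lemma not_commute (hp : p.Prime) : ∃ g ∈ omega p, ∃ h ∈ omega p, g * h ≠ h * g := by
  refine ⟨_, mem_omega ⟨1, 0, 0⟩ (by simp) (by simp), _,
    mem_omega ⟨0, 1, 0⟩ (by simp) (by simp), fun h => ?_⟩
  have h1 := congrArg HeisGroup.z h
  have h2 := mulSq_intCast p (p * p)
  push_cast at h2
  simp only [mul_z, mul_one, mul_zero, map_zero, add_zero, zero_add, h2] at h1
  have h3 : ((p ^ 4 : ℕ) : ZMod (p ^ 5)) = 0 := by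
    push_cast; linear_combination h1
  rw [ZMod.natCast_eq_zero_iff, Nat.pow_dvd_pow_iff_le_right hp.one_lt] at h3
  omega

/-- The central subgroup of `Ω₂(G^p)` of elements `(0, 0, c)`. -/
def centre (p : ℕ) : Subgroup (omega p) where
  carrier := {g | g.1.x = 0 ∧ g.1.y = 0}
  mul_mem' := by
    rintro g h ⟨h1, h2⟩ ⟨h3, h4⟩
    exact ⟨by simp [h1, h3], by simp [h2, h4]⟩
  one_mem' := ⟨rfl, rfl⟩
  inv_mem' := by
    rintro g ⟨h1, h2⟩
    exact ⟨by simp [h1], by simp [h2]⟩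

lemma commutator_centre : ⁅centre p, (⊤ : Subgroup (omega p))⁆ = ⊥ := by
  rw [eq_bot_iff, Subgroup.commutator_le]
  rintro g ⟨h1, h2⟩ h -
  rw [Subgroup.mem_bot]
  apply Subtype.ext
  change ⁅g.1, h.1⁆ = 1
  rw [commutator_eq, h1, h2]
  ext <;> simp

lemma commutator_omega :
    ⁅(⊤ : Subgroup (omega p)), (⊤ : Subgroup (omega p))⁆ ≤ subgroupPow (centre p) p := by
  rw [Subgroup.commutator_le]
  rintro g - h -
  obtain ⟨a, b, ha, hb⟩ := exists_of_mem_omega g.2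
  obtain ⟨a', b', ha', hb'⟩ := exists_of_mem_omega h.2
  obtain ⟨k, hk⟩ := ZMod.intCast_surjective (a * b' - a' * b)
  have h5 := natCast_pow_five p
  -- `(0, 0, p³ k)` is a `p`-th root of the commutator, and is itself the `p`-th power of
  -- `(0, 0, p² k)`.
  have hm := mem_omega (p := p) ⟨0, 0, p ^ 2 * k⟩ (by simp)
    (by simp only; linear_combination (k : ZMod (p ^ 5)) * h5)
  refine Subgroup.subset_closure ⟨⟨_, hm⟩, ⟨by simp, by simp⟩, ?_⟩
  apply Subtype.ext
  change (_ : HeisGroup p) ^ p = ⁅g.1, h.1⁆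
  have e : g.1.x * h.1.y - h.1.x * g.1.y = ((p * p * k : ℤ) : ZMod (p ^ 3)) := by
    push_cast
    rw [ha, hb, ha', hb', hk]; ring
  rw [commutator_eq, e, mulSq_intCast, pow_eq _ (by simp)]
  ext
  · simp
  · simp
  · simp only; push_cast; ring

lemma subgroupPow_mono {G : Type*} [Group G] {H K : Subgroup G} (h : H ≤ K) (n : ℕ) :
    subgroupPow H n ≤ subgroupPow K n :=
  Subgroup.closure_mono fun _ ⟨g, hg, e⟩ => ⟨g, h hg, e⟩

lemma exists_chain (p : ℕ) :
    ∃ H : ℕ → Subgroup (omega p), IsPowerfullyCentralChain p 2 H := by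
  refine ⟨fun k => if k = 0 then ⊥ else if k = 1 then centre p else ⊤, by simp, by simp, ?_, ?_⟩
  · intro k hk
    interval_cases k <;> simp
  · intro k hk
    interval_cases k
    · simp [commutator_centre]
    · simpa using commutator_omega

end HeisGroup

/-- A group with a powerfully central chain of length at most `1` is abelian. -/
lemma two_le_of_chain {p : ℕ} {G : Type*} [Group G] (hG : ∃ g h : G, g * h ≠ h * g) {n : ℕ}
    {H : ℕ → Subgroup G} (hH : IsPowerfullyCentralChain p n H) : 2 ≤ n := by
  obtain ⟨g, h, hne⟩ := hG
  obtain ⟨h0, hn, -, hc⟩ := hH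
  by_contra! hlt
  interval_cases n
  · have ht : ∀ x : G, x = 1 := fun x => by
      rw [← Subgroup.mem_bot, ← h0, hn]; trivial
    exact hne ((ht _).trans (ht _).symm)
  · have h1 := hc 0 one_pos
    rw [zero_add, hn, h0] at h1
    have hb : subgroupPow (⊥ : Subgroup G) p ≤ ⊥ := by
      rw [subgroupPow, Subgroup.closure_le]
      rintro x ⟨y, hy, rfl⟩
      exact pow_mem hy p
    have h2 := hb (h1 (Subgroup.commutator_mem_commutator (g₁ := g) (g₂ := h) trivial trivial))
    rw [Subgroup.mem_bot, commutatorElement_eq_one_iff_mul_comm] at h2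
    exact hne h2

theorem omega_statement_14 (p : ℕ) (hp : p.Prime) (hp2 : p ≠ 2) :
    ∃ (G : Type) (_ : Group G) (_ : Finite G),
      IsPGroup p G ∧ IsPowerful p G ∧
      ¬(∀ x ∈ omegaSubgroup p 2 (subgroupPow (⊤ : Subgroup G) p),
          ∀ y ∈ omegaSubgroup p 2 (subgroupPow (⊤ : Subgroup G) p), x * y = y * x) ∧
      IsPowerfullyNilpotent p ↥(omegaSubgroup p 2 (subgroupPow (⊤ : Subgroup G) p)) ∧
      powerfulNilpotencyClass p
        ↥(omegaSubgroup p 2 (subgroupPow (⊤ : Subgroup G) p)) = 2 := by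
  have hfin : Finite (HeisGroup p) := Nat.finite_of_card_ne_zero (by
    rw [HeisGroup.card_eq]; exact pow_ne_zero _ hp.ne_zero)
  obtain ⟨g, hg, h, hh, hne⟩ := HeisGroup.not_commute hp
  refine ⟨HeisGroup p, inferInstance, hfin, IsPGroup.of_card (HeisGroup.card_eq p),
    HeisGroup.isPowerful hp2, fun hab => hne (hab g hg h hh),
    ⟨?_, 2, HeisGroup.exists_chain p⟩, ?_⟩
  · rw [IsPowerful, if_neg hp2, commutator_def]
    exact HeisGroup.commutator_omega.trans (HeisGroup.subgroupPow_mono le_top p)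
  · refine le_antisymm (Nat.sInf_le (HeisGroup.exists_chain p))
      (le_csInf ⟨2, HeisGroup.exists_chain p⟩ ?_)
    rintro n ⟨H, hH⟩
    exact two_le_of_chain ⟨⟨g, hg⟩, ⟨h, hh⟩, fun e => hne (congrArg Subtype.val e)⟩ hH
end

section
/- Let G be a finite powerful 2-group and i ≥ 1. Then the quotient group Ω_i(G⁴) / (Ω_i(G⁴))⁴ is abelian. -/
open scoped commutatorElement

namespace OmegaPowerful

universe u

section Basic

variable {G : Type u} [Group G]

/-! ### Commutator identities and centralizers modulo a normal subgroup -/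

theorem comm_sq_left (x w : G) : ⁅x ^ 2, w⁆ = ⁅x, ⁅x, w⁆⁆ * ⁅x, w⁆ ^ 2 := by
  simp only [commutatorElement_def, pow_two]; group

theorem comm_sq_right (x w : G) : ⁅x, w ^ 2⁆ = ⁅x, w⁆ * ⁅w, ⁅x, w⁆⁆ * ⁅x, w⁆⁻¹ * ⁅x, w⁆ ^ 2 := by
  simp only [commutatorElement_def, pow_two]; group

theorem sq_mul_sq (a b : G) : a ^ 2 * b ^ 2 = (a * b) ^ 2 * (b⁻¹ * ⁅a⁻¹, b⁻¹⁆ * b⁻¹⁻¹) := by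
  simp only [commutatorElement_def, pow_two]; group

theorem comm_symm {K : Subgroup G} {x y : G} (h : ⁅x, y⁆ ∈ K) : ⁅y, x⁆ ∈ K := by
  rw [← commutatorElement_inv]; exact K.inv_mem h

/-- The elements of `G` that commute modulo the normal subgroup `K` with every element of `T`. -/
def centMod (K : Subgroup G) [hK : K.Normal] (T : Set G) : Subgroup G where
  carrier := {x | ∀ t ∈ T, ⁅x, t⁆ ∈ K}
  one_mem' := fun t _ => by simp
  mul_mem' := by
    intro a b ha hb t ht
    have e : ⁅a * b, t⁆ = a * ⁅b, t⁆ * a⁻¹ * ⁅a, t⁆ := by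
      simp only [commutatorElement_def]; group
    rw [e]
    exact K.mul_mem (hK.conj_mem _ (hb t ht) a) (ha t ht)
  inv_mem' := by
    intro a ha t ht
    have e : ⁅a⁻¹, t⁆ = a⁻¹ * ⁅a, t⁆⁻¹ * a⁻¹⁻¹ := by
      simp only [commutatorElement_def]; group
    rw [e]
    exact hK.conj_mem _ (K.inv_mem (ha t ht)) a⁻¹

theorem mem_centMod {K : Subgroup G} [K.Normal] {T : Set G} {x : G} :
    x ∈ centMod K T ↔ ∀ t ∈ T, ⁅x, t⁆ ∈ K := Iff.rfl

theorem closure_normal_of_conj {S : Set G} (hS : ∀ s ∈ S, ∀ g : G, g * s * g⁻¹ ∈ S) :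
    (Subgroup.closure S).Normal := by
  constructor
  intro x hx g
  have : Subgroup.closure S ≤ (Subgroup.closure S).comap (MulAut.conj g).toMonoidHom := by
    rw [Subgroup.closure_le]
    intro s hs
    exact Subgroup.subset_closure (hS s hs g)
  exact this hx

theorem subgroupPow_normal (H : Subgroup G) [hH : H.Normal] (n : ℕ) :
    (subgroupPow H n).Normal := by
  apply closure_normal_of_conj
  rintro _ ⟨h, hh, rfl⟩ g
  exact ⟨g * h * g⁻¹, hH.conj_mem h hh g, by rw [conj_pow]⟩

theorem omegaSubgroup_normal (p i : ℕ) (H : Subgroup G) [hH : H.Normal] :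
    (omegaSubgroup p i H).Normal := by
  apply closure_normal_of_conj
  rintro x ⟨hx, hx1⟩ g
  exact ⟨hH.conj_mem x hx g, by rw [conj_pow, hx1]; simp⟩

/-- If `M ≤ K [M, G]` in a nilpotent group with `K` normal, then `M ≤ K`. -/
theorem le_of_le_sup_commutator [Group.IsNilpotent G] {M K : Subgroup G} [K.Normal]
    (h : M ≤ K ⊔ ⁅M, (⊤ : Subgroup G)⁆) : M ≤ K := by
  have key : ∀ n, M ≤ K ⊔ (⊤ : Subgroup G).lowerCentralSeries n := by
    intro n
    induction n with
    | zero => simp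
    | succ n ih =>
      refine h.trans (sup_le le_sup_left ?_)
      rw [Subgroup.commutator_le]
      intro m hm g _
      have hle : K ⊔ (⊤ : Subgroup G).lowerCentralSeries n ≤
          centMod (K ⊔ (⊤ : Subgroup G).lowerCentralSeries (n + 1)) Set.univ := by
        refine sup_le ?_ ?_
        · intro k hk t _
          exact Subgroup.mem_sup_left
            (Subgroup.commutator_le_left K ⊤ (Subgroup.commutator_mem_commutator hk trivial))
        · intro k hk t _
          exact Subgroup.mem_sup_right (Subgroup.commutator_mem_commutator hk trivial)
      exact hle (ih hm) g trivial
  have hnil : Group.IsNilpotent (⊤ : Subgroup G) := inferInstance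
  obtain ⟨n, hn⟩ := (Subgroup.isNilpotent_iff_lowerCentralSeries (⊤ : Subgroup G)).1 hnil
  simpa [hn] using key n

/-! ### The series of iterated squares -/

/-- The series `D 0 = G`, `D (n+1) = (D n)²`. -/
def sqSeries (G : Type u) [Group G] : ℕ → Subgroup G
  | 0 => ⊤
  | n + 1 => subgroupPow (sqSeries G n) 2

local notation "D" => sqSeries G

instance sqSeries_normal (n : ℕ) : (D n).Normal := by
  induction n with
  | zero => exact inferInstanceAs (⊤ : Subgroup G).Normal
  | succ n ih => exact subgroupPow_normal _ _

theorem sq_mem_sqSeries {n : ℕ} {x : G} (hx : x ∈ D n) : x ^ 2 ∈ D (n + 1) :=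
  Subgroup.subset_closure ⟨x, hx, rfl⟩

theorem mem_sqSeries_zero (x : G) : x ∈ D 0 := Subgroup.mem_top x

theorem sqSeries_succ_le_iff {n : ℕ} {K : Subgroup G} :
    D (n + 1) ≤ K ↔ ∀ x ∈ D n, x ^ 2 ∈ K := by
  constructor
  · intro h x hx
    exact h (sq_mem_sqSeries hx)
  · intro h
    refine (Subgroup.closure_le _).2 ?_
    rintro _ ⟨x, hx, rfl⟩
    exact h x hx

theorem sqSeries_antitone : Antitone (sqSeries G) :=
  antitone_nat_of_succ_le fun n => sqSeries_succ_le_iff.2 fun _ hx => (D n).pow_mem hx 2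

theorem subgroupPow_two_lt [Finite G] (hG : IsPGroup 2 G) {H : Subgroup G} (hH : H ≠ ⊥) :
    subgroupPow H 2 < H := by
  have : Fact (Nat.Prime 2) := ⟨Nat.prime_two⟩
  obtain ⟨m, hm⟩ := IsPGroup.iff_card.1 (hG.to_subgroup H)
  have hm0 : m ≠ 0 := by
    rintro rfl
    exact hH (Subgroup.card_eq_one.1 (by simpa using hm))
  obtain ⟨m, rfl⟩ := Nat.exists_eq_succ_of_ne_zero hm0
  obtain ⟨K, hK⟩ := Sylow.exists_subgroup_card_pow_prime (G := H) 2 (n := m)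
    (by rw [hm]; exact pow_dvd_pow 2 (Nat.le_succ m))
  have hidx : K.index = 2 := by
    have := K.card_mul_index
    rw [hK, hm, pow_succ] at this
    exact Nat.eq_of_mul_eq_mul_left (by positivity) this
  have hle : subgroupPow H 2 ≤ K.map H.subtype := by
    refine (Subgroup.closure_le _).2 ?_
    rintro _ ⟨x, hx, rfl⟩
    exact ⟨⟨x, hx⟩ ^ 2, Subgroup.sq_mem_of_index_two hidx _, rfl⟩
  refine lt_of_le_of_lt hle (lt_of_le_of_ne (Subgroup.map_subtype_le K) ?_)
  intro h
  have : K = ⊤ := by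
    rw [eq_top_iff]
    intro x _
    have hx : (x : G) ∈ K.map H.subtype := by rw [h]; exact x.2
    obtain ⟨y, hy, hxy⟩ := hx
    have : y = x := Subtype.ext hxy
    exact this ▸ hy
  rw [this, Subgroup.index_top] at hidx
  omega

theorem exists_sqSeries_eq_bot [Finite G] (hG : IsPGroup 2 G) : ∃ n, D n = ⊥ := by
  by_contra! hne
  have key : ∀ n, Nat.card (D n) + n ≤ Nat.card G := by
    intro n
    induction n with
    | zero => simpa using Subgroup.card_le_card_group (D 0)
    | succ n ih =>
      have hlt : D (n + 1) < D n := subgroupPow_two_lt hG (hne n)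
      have : Nat.card (D (n + 1)) < Nat.card (D n) := Set.Finite.card_lt_card (Set.toFinite _) hlt
      omega
  have h1 := key (Nat.card G)
  have h2 : 0 < Nat.card (D (Nat.card G)) := Nat.card_pos
  omega

theorem subgroupPow_four_le : subgroupPow (⊤ : Subgroup G) 4 ≤ D 2 := by
  refine (Subgroup.closure_le _).2 ?_
  rintro _ ⟨x, -, rfl⟩
  have : x ^ 4 = (x ^ 2) ^ 2 := by rw [← pow_mul]
  rw [this]
  exact sq_mem_sqSeries (sq_mem_sqSeries (mem_sqSeries_zero x))

/-! ### Commutators and squares in a powerful 2-group -/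

variable [Finite G]

theorem commutator_sqSeries (hG : IsPGroup 2 G)
    (hp : commutator G ≤ subgroupPow (⊤ : Subgroup G) 4) (i : ℕ) :
    ∀ x ∈ D i, ∀ g : G, ⁅x, g⁆ ∈ D (i + 2) := by
  have : Fact (Nat.Prime 2) := ⟨Nat.prime_two⟩
  have hnil : Group.IsNilpotent G := hG.isNilpotent
  induction i with
  | zero =>
    intro x _ g
    exact subgroupPow_four_le (hp (Subgroup.commutator_mem_commutator trivial trivial))
  | succ i ih =>
    have hM : ⁅D (i + 2), (⊤ : Subgroup G)⁆ ≤ D (i + 3) := by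
      apply le_of_le_sup_commutator
      set M := ⁅D (i + 2), (⊤ : Subgroup G)⁆ with hMdef
      have hMle : M ≤ D (i + 2) := Subgroup.commutator_le_left _ _
      have h1 : D (i + 1) ≤ centMod (D (i + 3) ⊔ ⁅M, (⊤ : Subgroup G)⁆) (D (i + 2)) := by
        rw [sqSeries_succ_le_iff]
        intro w _ z hz
        have hv : ⁅w, z⁆ ∈ M := comm_symm (Subgroup.commutator_mem_commutator hz trivial)
        rw [comm_sq_left]
        refine Subgroup.mul_mem _ (Subgroup.mem_sup_right ?_)
          (Subgroup.mem_sup_left (sq_mem_sqSeries (hMle hv)))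
        exact comm_symm (Subgroup.commutator_mem_commutator hv trivial)
      have h2 : D (i + 2) ≤ centMod (D (i + 3) ⊔ ⁅M, (⊤ : Subgroup G)⁆) Set.univ := by
        rw [sqSeries_succ_le_iff]
        intro y hy g _
        have hz : ⁅y, g⁆ ∈ D (i + 2) := ih y (sqSeries_antitone (Nat.le_succ i) hy) g
        rw [comm_sq_left]
        exact Subgroup.mul_mem _ (h1 hy _ hz) (Subgroup.mem_sup_left (sq_mem_sqSeries hz))
      rw [hMdef, Subgroup.commutator_le]
      intro x hx g _
      exact h2 hx g trivial
    have h3 : D (i + 1) ≤ centMod (D (i + 3)) Set.univ := by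
      rw [sqSeries_succ_le_iff]
      intro x hx g _
      have hz : ⁅x, g⁆ ∈ D (i + 2) := ih x hx g
      rw [comm_sq_left]
      exact Subgroup.mul_mem _
        (comm_symm (hM (Subgroup.commutator_mem_commutator hz trivial))) (sq_mem_sqSeries hz)
    intro x hx g
    exact h3 hx g trivial

theorem exists_sq_mul (hG : IsPGroup 2 G)
    (hp : commutator G ≤ subgroupPow (⊤ : Subgroup G) 4) (k : ℕ) {x : G} (hx : x ∈ D (k + 1)) :
    ∃ y ∈ D k, ∃ d ∈ D (k + 2), x = y ^ 2 * d := by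
  induction hx using Subgroup.closure_induction with
  | mem x hx =>
    obtain ⟨y, hy, rfl⟩ := hx
    exact ⟨y, hy, 1, Subgroup.one_mem _, by simp⟩
  | one => exact ⟨1, Subgroup.one_mem _, 1, Subgroup.one_mem _, by simp⟩
  | mul a b _ _ iha ihb =>
    obtain ⟨y, hy, d, hd, rfl⟩ := iha
    obtain ⟨y', hy', d', hd', rfl⟩ := ihb
    refine ⟨y * y', Subgroup.mul_mem _ hy hy',
      (y'⁻¹ * ⁅y⁻¹, y'⁻¹⁆ * y'⁻¹⁻¹) * ((y' ^ 2)⁻¹ * d * (y' ^ 2)⁻¹⁻¹) * d', ?_, ?_⟩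
    · refine Subgroup.mul_mem _ (Subgroup.mul_mem _ ?_ ?_) hd'
      · exact (sqSeries_normal _).conj_mem _
          (commutator_sqSeries hG hp k _ (Subgroup.inv_mem _ hy) _) _
      · exact (sqSeries_normal _).conj_mem _ hd _
    · rw [← mul_assoc, ← mul_assoc, ← mul_assoc ((y * y') ^ 2), ← sq_mul_sq]
      group
  | inv a _ iha =>
    obtain ⟨y, hy, d, hd, rfl⟩ := iha
    refine ⟨y⁻¹, Subgroup.inv_mem _ hy, y ^ 2 * d⁻¹ * (y ^ 2)⁻¹,
      (sqSeries_normal _).conj_mem _ (Subgroup.inv_mem _ hd) _, by group⟩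

/-- In a finite powerful 2-group, every element of `D (k+1)` is the square of an element of `D k`:
a square root modulo `D n` can be corrected to one modulo `D (n+1)`. -/
theorem exists_sq_eq (hG : IsPGroup 2 G)
    (hp : commutator G ≤ subgroupPow (⊤ : Subgroup G) 4) {k : ℕ} {x : G} (hx : x ∈ D (k + 1)) :
    ∃ y ∈ D k, y ^ 2 = x := by
  have key : ∀ n, ∃ y ∈ D k, ∃ d ∈ D (k + 2 + n), x = y ^ 2 * d := by
    intro n
    induction n with
    | zero => exact exists_sq_mul hG hp k hx
    | succ n ih =>
      obtain ⟨y, hy, d, hd, rfl⟩ := ih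
      have hd' : d ∈ D ((k + 1 + n) + 1) := by
        convert hd using 2; ring
      obtain ⟨y', hy', d', hd'', rfl⟩ := exists_sq_mul hG hp _ hd'
      have e : k + 2 + (n + 1) = k + 1 + n + 2 := by ring
      refine ⟨y * y', Subgroup.mul_mem _ hy (sqSeries_antitone (by omega) hy'),
        (y'⁻¹ * ⁅y⁻¹, y'⁻¹⁆ * y'⁻¹⁻¹) * d', ?_, ?_⟩
      · rw [e]
        refine Subgroup.mul_mem _ ((sqSeries_normal _).conj_mem _ ?_ _) hd''
        exact comm_symm (commutator_sqSeries hG hp _ _ (Subgroup.inv_mem _ hy') _)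
      · rw [← mul_assoc, ← mul_assoc, ← sq_mul_sq]
  obtain ⟨n, hn⟩ := exists_sqSeries_eq_bot hG
  obtain ⟨y, hy, d, hd, rfl⟩ := key n
  have : d ∈ D n := sqSeries_antitone (by omega) hd
  rw [hn, Subgroup.mem_bot] at this
  exact ⟨y, hy, by simp [this]⟩

theorem exists_pow_four_eq (hG : IsPGroup 2 G)
    (hp : commutator G ≤ subgroupPow (⊤ : Subgroup G) 4) {x : G} (hx : x ∈ D 2) :
    ∃ y : G, y ^ 4 = x := by
  obtain ⟨y, hy, rfl⟩ := exists_sq_eq hG hp hx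
  obtain ⟨z, -, rfl⟩ := exists_sq_eq hG hp hy
  exact ⟨z, by rw [← pow_mul]⟩

/-! ### The refinement step -/

/-- The inductive hypothesis `[D i, D j] ≤ D n` for `i + j ≥ 4`. -/
def CommBound (G : Type u) [Group G] (n : ℕ) : Prop :=
  ∀ i j, 4 ≤ i + j → ∀ x ∈ sqSeries G i, ∀ y ∈ sqSeries G j, ⁅x, y⁆ ∈ sqSeries G n

theorem CommBound.of_five_le (hG : IsPGroup 2 G)
    (hp : commutator G ≤ subgroupPow (⊤ : Subgroup G) 4) {n : ℕ} (h : CommBound G n)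
    {i j : ℕ} (hij : 5 ≤ i + j) {x y : G} (hx : x ∈ D i) (hy : y ∈ D j) :
    ⁅x, y⁆ ∈ D (n + 1) := by
  have key : ∀ i j, 5 ≤ i + 1 + j → ∀ x ∈ D (i + 1), ∀ y ∈ D j, ⁅x, y⁆ ∈ D (n + 1) := by
    intro i j hij x hx y hy
    obtain ⟨w, hw, rfl⟩ := exists_sq_eq hG hp hx
    have hz : ⁅w, y⁆ ∈ D n := h i j (by omega) w hw y hy
    rw [comm_sq_left]
    refine Subgroup.mul_mem _ ?_ (sq_mem_sqSeries hz)
    exact comm_symm (sqSeries_antitone (by omega) (commutator_sqSeries hG hp n _ hz _))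
  rcases i with _ | i
  · obtain ⟨j, rfl⟩ : ∃ j', j = j' + 1 := ⟨j - 1, by omega⟩
    exact comm_symm (key j 0 (by omega) y hy x hx)
  · exact key i j hij x hx y hy

theorem commutator_three (hG : IsPGroup 2 G)
    (hp : commutator G ≤ subgroupPow (⊤ : Subgroup G) 4)
    {i j : ℕ} (hij : i + j = 3) {x y : G} (hx : x ∈ D i) (hy : y ∈ D j) : ⁅x, y⁆ ∈ D 5 := by
  have h21 : ∀ x ∈ D 2, ∀ y ∈ D 1, ⁅x, y⁆ ∈ D 5 := by
    intro x hx y hy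
    obtain ⟨w, -, rfl⟩ := exists_sq_eq hG hp hy
    have hz : ⁅x, w⁆ ∈ D 4 := commutator_sqSeries hG hp 2 x hx w
    rw [comm_sq_right]
    refine Subgroup.mul_mem _ ((sqSeries_normal _).conj_mem _ ?_ _) (sq_mem_sqSeries hz)
    exact comm_symm (sqSeries_antitone (by omega) (commutator_sqSeries hG hp 4 _ hz w))
  obtain ⟨rfl, rfl⟩ | ⟨rfl, rfl⟩ | ⟨rfl, rfl⟩ | ⟨rfl, rfl⟩ :
      (i = 0 ∧ j = 3) ∨ (i = 1 ∧ j = 2) ∨ (i = 2 ∧ j = 1) ∨ (i = 3 ∧ j = 0) := by omega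
  · exact comm_symm (commutator_sqSeries hG hp 3 y hy x)
  · exact comm_symm (h21 y hy x hx)
  · exact h21 x hx y hy
  · exact commutator_sqSeries hG hp 3 x hx y

/-- Both `[x², y]` and `[x, y²]` are congruent to `[x, y]²` modulo `D (n+1)`. -/
theorem CommBound.sq_left_iff (hG : IsPGroup 2 G)
    (hp : commutator G ≤ subgroupPow (⊤ : Subgroup G) 4) {n : ℕ} (h : CommBound G n)
    {i j : ℕ} (hij : i + j = 3) {x y : G} (hx : x ∈ D i) (hy : y ∈ D j) :
    ⁅x ^ 2, y⁆ ∈ D (n + 1) ↔ ⁅x, y ^ 2⁆ ∈ D (n + 1) := by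
  have hz := commutator_three hG hp hij hx hy
  rw [comm_sq_left, comm_sq_right,
    Subgroup.mul_mem_cancel_left _ (h.of_five_le hG hp (by omega) hx hz),
    Subgroup.mul_mem_cancel_left _ ((sqSeries_normal _).conj_mem _
      (h.of_five_le hG hp (by omega) hy hz) _)]

theorem CommBound.pow_four_iff (hG : IsPGroup 2 G)
    (hp : commutator G ≤ subgroupPow (⊤ : Subgroup G) 4) {n : ℕ} (h : CommBound G n) (x y : G) :
    ⁅x ^ 4, y ^ 4⁆ ∈ D (n + 1) ↔ ⁅x, y ^ 16⁆ ∈ D (n + 1) := by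
  have hx := mem_sqSeries_zero x
  have hy := sq_mem_sqSeries (sq_mem_sqSeries (mem_sqSeries_zero y))
  have h1 := h.sq_left_iff hG hp rfl (sq_mem_sqSeries hx) hy
  have h2 := h.sq_left_iff hG hp rfl hx (sq_mem_sqSeries hy)
  simp only [← pow_mul, Nat.reduceMul] at h1 h2
  exact h1.trans h2

theorem CommBound.pow_sixteen_iff (hG : IsPGroup 2 G)
    (hp : commutator G ≤ subgroupPow (⊤ : Subgroup G) 4) {n : ℕ} (h : CommBound G n) (x y : G) :
    ⁅x ^ 16, y⁆ ∈ D (n + 1) ↔ ⁅x, y ^ 16⁆ ∈ D (n + 1) := by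
  rw [← h.pow_four_iff hG hp]
  constructor
  · exact fun hxy => comm_symm ((h.pow_four_iff hG hp y x).2 (comm_symm hxy))
  · exact fun hxy => comm_symm ((h.pow_four_iff hG hp y x).1 (comm_symm hxy))

theorem mem_centMod_iff_pow (hG : IsPGroup 2 G)
    (hp : commutator G ≤ subgroupPow (⊤ : Subgroup G) 4) {n : ℕ} {x : G} :
    x ∈ centMod (D (n + 1)) (D 4) ↔ ∀ y : G, ⁅x, y ^ 16⁆ ∈ D (n + 1) := by
  constructor
  · intro h y
    apply h
    have := sq_mem_sqSeries (sq_mem_sqSeries (sq_mem_sqSeries (sq_mem_sqSeries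
      (mem_sqSeries_zero y))))
    simpa only [← pow_mul, Nat.reduceMul, Nat.reduceAdd, SetLike.mem_coe] using this
  · intro h t ht
    obtain ⟨a, ha, rfl⟩ := exists_sq_eq hG hp ht
    obtain ⟨b, hb, rfl⟩ := exists_sq_eq hG hp ha
    obtain ⟨c, rfl⟩ := exists_pow_four_eq hG hp hb
    have := h c
    simpa only [← pow_mul, Nat.reduceMul] using this

/-- The centralizer of `D 4` modulo `D (n+1)` is powerful. -/
theorem CommBound.centMod_powerful (hG : IsPGroup 2 G)
    (hp : commutator G ≤ subgroupPow (⊤ : Subgroup G) 4) {n : ℕ} (h : CommBound G n) :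
    commutator (centMod (D (n + 1)) (D 4)) ≤
      subgroupPow (⊤ : Subgroup (centMod (D (n + 1)) (D 4))) 4 := by
  rw [_root_.commutator_def, Subgroup.commutator_le]
  rintro ⟨a, ha⟩ - ⟨b, hb⟩ -
  obtain ⟨k, hk⟩ := exists_pow_four_eq hG hp
    (commutator_sqSeries hG hp 0 a (mem_sqSeries_zero a) b)
  have hkP : k ∈ centMod (D (n + 1)) (D 4) := by
    rw [mem_centMod_iff_pow hG hp]
    intro y
    rw [← h.pow_four_iff hG hp, hk]
    have hy : y ^ 4 ∈ D 2 := subgroupPow_four_le (Subgroup.subset_closure ⟨y, trivial, rfl⟩)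
    generalize y ^ 4 = w at hy ⊢
    have hca : ⁅a, w⁆ ∈ D 4 := comm_symm (commutator_sqSeries hG hp 2 w hy a)
    have hcb : ⁅b, w⁆ ∈ D 4 := comm_symm (commutator_sqSeries hG hp 2 w hy b)
    have hab : ⁅a, ⁅b, w⁆⁆ ∈ D (n + 1) := ha _ hcb
    have hba : ⁅b, ⁅a, w⁆⁆ ∈ D (n + 1) := hb _ hca
    have haa : ⁅a, ⁅a, w⁆⁆ ∈ D (n + 1) := ha _ hca
    have hbb : ⁅b, ⁅b, w⁆⁆ ∈ D (n + 1) := hb _ hcb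
    have hcc : ⁅⁅a, w⁆, ⁅b, w⁆⁆ ∈ D (n + 1) := h.of_five_le hG hp (by omega) hca hcb
    -- Modulo `D (n+1)`, conjugation by `a` and by `b` multiplies `w` by commuting elements
    -- `[a, w]` and `[b, w]` which are themselves fixed by `a` and `b`.
    simp only [← QuotientGroup.eq_one_iff] at haa hab hba hbb hcc ⊢
    simp only [← QuotientGroup.mk'_apply, map_commutatorElement] at haa hab hba hbb hcc ⊢
    generalize QuotientGroup.mk' (D (n + 1)) a = a at haa hab hba hbb hcc ⊢
    generalize QuotientGroup.mk' (D (n + 1)) b = b at haa hab hba hbb hcc ⊢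
    generalize QuotientGroup.mk' (D (n + 1)) w = w at haa hab hba hbb hcc ⊢
    have ea : a * w = ⁅a, w⁆ * w * a := by simp only [commutatorElement_def]; group
    have eb : b * w = ⁅b, w⁆ * w * b := by simp only [commutatorElement_def]; group
    rw [commutatorElement_eq_one_iff_mul_comm] at haa hab hba hbb hcc
    generalize ⁅a, w⁆ = c at ea haa hab hba hbb hcc
    generalize ⁅b, w⁆ = d at eb haa hab hba hbb hcc
    have act : ∀ p : G ⧸ D (n + 1), Commute p (c * d) → p * w = c * d * w * p →
        p⁻¹ * w * p = (c * d)⁻¹ * w := by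
      intro p hpc hpw
      have e : p * ((c * d)⁻¹ * w) = w * p := by
        rw [← mul_assoc, hpc.inv_right.eq, mul_assoc, hpw]; group
      rw [mul_assoc, ← e, inv_mul_cancel_left]
    have hac : Commute a (c * d) := Commute.mul_right haa hab
    have hbc : Commute b (c * d) := Commute.mul_right hba hbb
    have e1 : a * b * w = c * d * w * (a * b) := by
      calc a * b * w = a * (b * w) := by group
        _ = (a * d) * w * b := by rw [eb]; group
        _ = d * (a * w) * b := by rw [hab]; group
        _ = (d * c) * w * (a * b) := by rw [ea]; group
        _ = c * d * w * (a * b) := by rw [hcc]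
    have e2 : b * a * w = c * d * w * (b * a) := by
      calc b * a * w = b * (a * w) := by group
        _ = (b * c) * w * a := by rw [ea]; group
        _ = c * (b * w) * a := by rw [hba]; group
        _ = c * d * w * (b * a) := by rw [eb]; group
    -- Hence `a * b` and `b * a` act in the same way on `w`, so `[a, b]` commutes with `w`.
    have f : (a * b)⁻¹ * w * (a * b) = (b * a)⁻¹ * w * (b * a) := by
      rw [act _ (hac.mul_left hbc) e1, act _ (hbc.mul_left hac) e2]
    rw [commutatorElement_eq_one_iff_mul_comm]
    calc ⁅a, b⁆ * w = a * b * ((b * a)⁻¹ * w * (b * a)) * (b * a)⁻¹ := by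
          simp only [commutatorElement_def]; group
      _ = w * ⁅a, b⁆ := by rw [← f]; simp only [commutatorElement_def]; group
  refine Subgroup.subset_closure ⟨⟨k, hkP⟩, trivial, Subtype.ext ?_⟩
  exact hk

theorem CommBound.succ (hG : IsPGroup 2 G)
    (hp : commutator G ≤ subgroupPow (⊤ : Subgroup G) 4) {n : ℕ} (h : CommBound G n)
    (htop : centMod (D (n + 1)) (D 4) = ⊤) : CommBound G (n + 1) := by
  intro i j hij x hx y hy
  rcases Nat.lt_or_ge 4 (i + j) with hlt | hge
  · exact h.of_five_le hG hp hlt hx hy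
  have h04 : ∀ x : G, ∀ y ∈ D 4, ⁅x, y⁆ ∈ D (n + 1) := by
    intro x y hy
    have hx : x ∈ centMod (D (n + 1)) (D 4) := by rw [htop]; trivial
    exact hx y hy
  have h13 : ∀ x ∈ D 1, ∀ y ∈ D 3, ⁅x, y⁆ ∈ D (n + 1) := by
    intro x hx y hy
    obtain ⟨w, hw, rfl⟩ := exists_sq_eq hG hp hx
    exact (h.sq_left_iff hG hp rfl hw hy).2 (h04 _ _ (sq_mem_sqSeries hy))
  obtain ⟨rfl, rfl⟩ | ⟨rfl, rfl⟩ | ⟨rfl, rfl⟩ | ⟨rfl, rfl⟩ | ⟨rfl, rfl⟩ :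
      (i = 0 ∧ j = 4) ∨ (i = 1 ∧ j = 3) ∨ (i = 2 ∧ j = 2) ∨ (i = 3 ∧ j = 1) ∨
        (i = 4 ∧ j = 0) := by omega
  · exact h04 x y hy
  · exact h13 x hx y hy
  · obtain ⟨w, hw, rfl⟩ := exists_sq_eq hG hp hx
    exact (h.sq_left_iff hG hp rfl hw hy).2 (h13 _ hw _ (sq_mem_sqSeries hy))
  · exact comm_symm (h13 y hy x hx)
  · exact comm_symm (h04 y x hx)

end Basic

/-! ### Commuting fourth powers and normal subgroups of `G⁴` -/

/-- In a finite powerful 2-group, the fourth powers of two elements of order dividing 16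
commute. -/
theorem commute_pow_four (m : ℕ) : ∀ (G : Type u) [Group G] [Finite G], Nat.card G = m →
    IsPGroup 2 G → commutator G ≤ subgroupPow (⊤ : Subgroup G) 4 →
    ∀ g h : G, g ^ 16 = 1 → h ^ 16 = 1 → Commute (g ^ 4) (h ^ 4) := by
  induction m using Nat.strong_induction_on with
  | _ m ih =>
  intro G _ _ hm hG hp g h hg hh
  by_contra hne
  have key : ∀ n, CommBound G n := by
    intro n
    induction n with
    | zero => exact fun i j _ x _ y _ => mem_sqSeries_zero _
    | succ n hn =>
      apply hn.succ hG hp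
      by_contra htop
      have mem : ∀ x : G, x ^ 16 = 1 → x ∈ centMod (sqSeries G (n + 1)) (sqSeries G 4) := by
        intro x hx
        rw [mem_centMod_iff_pow hG hp]
        intro y
        rw [← hn.pow_sixteen_iff hG hp, hx]
        simp
      have hlt : Nat.card (centMod (sqSeries G (n + 1)) (sqSeries G 4)) < m := by
        rw [← hm]
        exact lt_of_le_of_ne (Subgroup.card_le_card_group _)
          fun hc => htop (Subgroup.eq_top_of_card_eq _ hc)
      have := ih _ hlt _ rfl (hG.to_subgroup _) (hn.centMod_powerful hG hp)
        ⟨g, mem g hg⟩ ⟨h, mem h hh⟩ (Subtype.ext hg) (Subtype.ext hh)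
      exact hne (congrArg Subtype.val this)
  obtain ⟨n, hn⟩ := exists_sqSeries_eq_bot hG
  have hmem : ∀ x : G, x ^ 4 ∈ sqSeries G 2 := fun x =>
    subgroupPow_four_le (Subgroup.subset_closure ⟨x, trivial, rfl⟩)
  have := key n 2 2 le_rfl _ (hmem g) _ (hmem h)
  rw [hn, Subgroup.mem_bot, commutatorElement_eq_one_iff_commute] at this
  exact hne this

/-- A normal subgroup `N` of a finite powerful 2-group `G` with `N ≤ G⁴` satisfies
`[N, N] ≤ N⁴`. -/
theorem commutator_mem_subgroupPow_four {G : Type u} [Group G] [Finite G] (hG : IsPGroup 2 G)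
    (hp : commutator G ≤ subgroupPow (⊤ : Subgroup G) 4) (N : Subgroup G) [N.Normal]
    (hN : N ≤ subgroupPow (⊤ : Subgroup G) 4) {x y : G} (hx : x ∈ N) (hy : y ∈ N) :
    ⁅x, y⁆ ∈ subgroupPow N 4 := by
  have hnorm : (subgroupPow N 4).Normal := subgroupPow_normal N 4
  have hpQ : commutator (G ⧸ subgroupPow N 4) ≤
      subgroupPow (⊤ : Subgroup (G ⧸ subgroupPow N 4)) 4 := by
    have hle : subgroupPow (⊤ : Subgroup G) 4 ≤
        (subgroupPow (⊤ : Subgroup (G ⧸ subgroupPow N 4)) 4).comap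
          (QuotientGroup.mk' (subgroupPow N 4)) := by
      refine (Subgroup.closure_le _).2 ?_
      rintro _ ⟨z, -, rfl⟩
      exact Subgroup.subset_closure ⟨(z : G ⧸ subgroupPow N 4), trivial, rfl⟩
    rw [_root_.commutator_def, Subgroup.commutator_le]
    intro a _ b _
    obtain ⟨a, rfl⟩ := QuotientGroup.mk'_surjective _ a
    obtain ⟨b, rfl⟩ := QuotientGroup.mk'_surjective _ b
    rw [← map_commutatorElement]
    exact hle (hp (Subgroup.commutator_mem_commutator trivial trivial))
  obtain ⟨g, rfl⟩ := exists_pow_four_eq hG hp (subgroupPow_four_le (hN hx))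
  obtain ⟨h, rfl⟩ := exists_pow_four_eq hG hp (subgroupPow_four_le (hN hy))
  have h16 : ∀ z : G, z ^ 4 ∈ N → (QuotientGroup.mk' (subgroupPow N 4) z) ^ 16 = 1 := by
    intro z hz
    rw [← map_pow, QuotientGroup.mk'_apply, QuotientGroup.eq_one_iff]
    exact Subgroup.subset_closure ⟨z ^ 4, hz, by rw [← pow_mul]⟩
  have hc := commute_pow_four _ _ rfl (hG.to_quotient (subgroupPow N 4)) hpQ _ _
    (h16 g hx) (h16 h hy)
  rwa [← commutatorElement_eq_one_iff_commute, ← map_pow, ← map_pow, ← map_commutatorElement,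
    QuotientGroup.mk'_apply, QuotientGroup.eq_one_iff] at hc

theorem subgroupPow_le_map_subtype {G : Type u} [Group G] (N : Subgroup G) (n : ℕ) :
    subgroupPow N n ≤ (subgroupPow (⊤ : Subgroup N) n).map N.subtype := by
  refine (Subgroup.closure_le _).2 ?_
  rintro _ ⟨z, hz, rfl⟩
  exact ⟨⟨z, hz⟩ ^ n, Subgroup.subset_closure ⟨⟨z, hz⟩, trivial, rfl⟩, rfl⟩

end OmegaPowerful

theorem omega_statement_15 (G : Type*) [Group G] [Finite G] (hG : IsPGroup 2 G)
    (hpow : IsPowerful 2 G) (i : ℕ) (hi : 1 ≤ i) :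
    ∀ x y : ↥(omegaSubgroup 2 i (subgroupPow (⊤ : Subgroup G) 4)) ⧸
        subgroupPow (⊤ : Subgroup ↥(omegaSubgroup 2 i (subgroupPow (⊤ : Subgroup G) 4))) 4,
      x * y = y * x := by
  have hp : commutator G ≤ subgroupPow (⊤ : Subgroup G) 4 := by
    simpa only [IsPowerful, if_true] using hpow
  intro x y
  obtain ⟨a, rfl⟩ := QuotientGroup.mk'_surjective _ x
  obtain ⟨b, rfl⟩ := QuotientGroup.mk'_surjective _ y
  have hnorm := OmegaPowerful.omegaSubgroup_normal 2 i (subgroupPow (⊤ : Subgroup G) 4)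
  have hle : omegaSubgroup 2 i (subgroupPow (⊤ : Subgroup G) 4) ≤
      subgroupPow (⊤ : Subgroup G) 4 := (Subgroup.closure_le _).2 fun z hz => hz.1
  have hmem := OmegaPowerful.subgroupPow_le_map_subtype _ _
    (OmegaPowerful.commutator_mem_subgroupPow_four hG hp _ hle a.2 b.2)
  obtain ⟨c, hc, hcab⟩ := hmem
  have hcab' : c = ⁅a, b⁆ := Subtype.ext hcab
  rw [← commutatorElement_eq_one_iff_mul_comm, ← map_commutatorElement, QuotientGroup.mk'_apply,
    QuotientGroup.eq_one_iff, ← hcab']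
  exact hc
end
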